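/- For every nonnegative integer k there exists a family (P_e) of positive rational numbers, indexed by the covering edges e of L7(k), with the following property: let V be the complex vector space with basis {v_t : t ∈ L7(k)} and, for each node i of the E7 Dynkin diagram, define linear operators on V by X_i v_r := Σ √(P_e)·v_s (sum over color-i edges e: r ⋖ s out of r), Y_i v_s := Σ √(P_e)·v_r (sum over color-i edges e: r ⋖ s into s), and H_i v_t := m_i(t)·v_t; then there is a Lie algebra homomorphism φ : 𝔤(E7) → End(V) with φ(x_i) = X_i, φ(y_i) = Y_i, φ(h_i) = H_i for every node i. Moreover, for any such family and homomorphism, the resulting 𝔤(E7)-module V is irreducible (its only 𝔤(E7)-invariant subspaces are 0 and V) and has highest weight kω_1: the vector v_{t_max} indexed by the maximal element t_max of L7(k) satisfies X_i v_{t_max} = 0 for every node i, H_1 v_{t_max} = k·v_{t_max}, and H_j v_{t_max} = 0 for every node j ≠ 1. -/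

import Mathlib

noncomputable section

namespace CL

variable {N : Type} [DecidableEq N] [Fintype N]

/-- One-step relation generating the partial order on the poset of positions. -/
def step (adj : N → N → Prop) (pos : Finset (N × ℕ)) (x y : N × ℕ) : Prop :=
  x ∈ pos ∧ y ∈ pos ∧ adj x.1 y.1 ∧ y.2 = x.2 + 1

/-- The partial order on positions, generated by `step`. -/
def ple (adj : N → N → Prop) (pos : Finset (N × ℕ)) : N × ℕ → N × ℕ → Prop :=
  Relation.ReflTransGen (step adj pos)

/-- The lattice of `ℕ`-labellings of the positions which are bounded by `k`, order-reversing,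
and satisfy a further constraint `extra`. -/
def Elt (adj : N → N → Prop) (pos : Finset (N × ℕ)) (k : ℕ)
    (extra : ({x : N × ℕ // x ∈ pos} → ℕ) → Prop) : Type :=
  {c : {x : N × ℕ // x ∈ pos} → ℕ //
    (∀ x, c x ≤ k) ∧ (∀ x y, ple adj pos y.1 x.1 → c x ≤ c y) ∧ extra c}

variable {adj : N → N → Prop} {pos : Finset (N × ℕ)} {k : ℕ}
  {extra : ({x : N × ℕ // x ∈ pos} → ℕ) → Prop}

instance : Finite (Elt adj pos k extra) := by
  apply Finite.of_injective
    (fun c : Elt adj pos k extra =>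
      fun x => (⟨c.1 x, Nat.lt_succ_of_le (c.2.1 x)⟩ : Fin (k + 1)))
  intro c d h
  apply Subtype.ext
  funext x
  exact congrArg Fin.val (congrFun h x)

instance : Fintype (Elt adj pos k extra) := Fintype.ofFinite _

instance : DecidableEq (Elt adj pos k extra) := by unfold Elt; infer_instance

/-- Componentwise comparison of labellings. -/
def elLe (r s : Elt adj pos k extra) : Prop := ∀ x, r.1 x ≤ s.1 x

/-- The covering edge of color `i`: exactly one entry, at a position of color `i`,
is increased by one. -/
def edge (i : N) (r s : Elt adj pos k extra) : Prop :=
  ∃ x : {x : N × ℕ // x ∈ pos}, x.1.1 = i ∧ s.1 x = r.1 x + 1 ∧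
    ∀ y, y ≠ x → s.1 y = r.1 y

instance (i : N) (r s : Elt adj pos k extra) : Decidable (edge i r s) := by
  unfold edge; infer_instance

/-- The rank function: the sum of all entries. -/
def rk (t : Elt adj pos k extra) : ℕ := ∑ x ∈ pos.attach, t.1 x

/-- The connected component of `t` in the graph of color-`i` covering edges. -/
def comp (i : N) (t : Elt adj pos k extra) : Set (Elt adj pos k extra) :=
  {s | Relation.ReflTransGen (fun a b => edge i a b ∨ edge i b a) t s}

/-- The integer `m_i(t) = (ρ(t) − min ρ on comp_i(t)) − (max ρ on comp_i(t) − ρ(t))`. -/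
def mwt (i : N) (t : Elt adj pos k extra) : ℤ :=
  ((rk t : ℤ) - ((sInf (rk '' comp i t) : ℕ) : ℤ)) -
    (((sSup (rk '' comp i t) : ℕ) : ℤ) - (rk t : ℤ))

end CL

namespace CL

/-- Generators `x_i, y_i, h_i` for the Serre presentation. -/
inductive SGen (I : Type) : Type
  | X : I → SGen I
  | Y : I → SGen I
  | H : I → SGen I

variable {I : Type}

/-- The generator `x_i` in the free Lie algebra. -/
def gx (i : I) : FreeLieAlgebra ℂ (SGen I) := FreeLieAlgebra.of ℂ (SGen.X i)

/-- The generator `y_i` in the free Lie algebra. -/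
def gy (i : I) : FreeLieAlgebra ℂ (SGen I) := FreeLieAlgebra.of ℂ (SGen.Y i)

/-- The generator `h_i` in the free Lie algebra. -/
def gh (i : I) : FreeLieAlgebra ℂ (SGen I) := FreeLieAlgebra.of ℂ (SGen.H i)

/-- The Serre relations determined by the matrix `A`:
`[h_i,h_j] = 0`; `[x_i,y_i] = h_i` and `[x_i,y_j] = 0` for `i ≠ j`;
`[h_i,x_j] = A_{j,i}·x_j`; `[h_i,y_j] = −A_{j,i}·y_j`; and
`ad(x_i)^{1−A_{j,i}}(x_j) = 0 = ad(y_i)^{1−A_{j,i}}(y_j)` for `i ≠ j`. -/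
def serreSet (A : I → I → ℤ) : Set (FreeLieAlgebra ℂ (SGen I)) :=
  {z | ∃ i j : I, z = ⁅gh i, gh j⁆} ∪
  {z | ∃ i : I, z = ⁅gx i, gy i⁆ - gh i} ∪
  {z | ∃ i j : I, i ≠ j ∧ z = ⁅gx i, gy j⁆} ∪
  {z | ∃ i j : I, z = ⁅gh i, gx j⁆ - (A j i) • gx j} ∪
  {z | ∃ i j : I, z = ⁅gh i, gy j⁆ + (A j i) • gy j} ∪
  {z | ∃ i j : I, i ≠ j ∧
    z = ((LieAlgebra.ad ℂ (FreeLieAlgebra ℂ (SGen I)) (gx i)) ^ (1 - A j i).toNat) (gx j)} ∪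
  {z | ∃ i j : I, i ≠ j ∧
    z = ((LieAlgebra.ad ℂ (FreeLieAlgebra ℂ (SGen I)) (gy i)) ^ (1 - A j i).toNat) (gy j)}

/-- The Lie ideal generated by the Serre relations. -/
def serreIdeal (A : I → I → ℤ) : LieIdeal ℂ (FreeLieAlgebra ℂ (SGen I)) :=
  LieSubmodule.lieSpan ℂ _ (serreSet A)

/-- The Lie algebra `𝔤(A)` presented by generators `x_i, y_i, h_i` subject to
the Serre relations determined by `A`. -/
abbrev gLie (A : I → I → ℤ) : Type := FreeLieAlgebra ℂ (SGen I) ⧸ serreIdeal A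

/-- The image of `x_i` in `𝔤(A)`. -/
def px (A : I → I → ℤ) (i : I) : gLie A := LieSubmodule.Quotient.mk (N := serreIdeal A) (gx i)

/-- The image of `y_i` in `𝔤(A)`. -/
def py (A : I → I → ℤ) (i : I) : gLie A := LieSubmodule.Quotient.mk (N := serreIdeal A) (gy i)

/-- The image of `h_i` in `𝔤(A)`. -/
def ph (A : I → I → ℤ) (i : I) : gLie A := LieSubmodule.Quotient.mk (N := serreIdeal A) (gh i)

end CL

namespace CL

variable {N : Type} [DecidableEq N] [Fintype N]
variable {adj : N → N → Prop} {pos : Finset (N × ℕ)} {k : ℕ}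
  {extra : ({x : N × ℕ // x ∈ pos} → ℕ) → Prop}

/-- The raising operator `x_i·`, with coefficient `√(P_e)` on each color-`i` edge `e`. -/
def opX (P : Elt adj pos k extra → Elt adj pos k extra → ℚ) (i : N) :
    Module.End ℂ (Elt adj pos k extra → ℂ) :=
  Matrix.mulVecLin fun s r => if edge i r s then (↑(Real.sqrt (P r s)) : ℂ) else 0

/-- The lowering operator `y_i·`, with coefficient `√(P_e)` on each color-`i` edge `e`. -/
def opY (P : Elt adj pos k extra → Elt adj pos k extra → ℚ) (i : N) :
    Module.End ℂ (Elt adj pos k extra → ℂ) :=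
  Matrix.mulVecLin fun r s => if edge i r s then (↑(Real.sqrt (P r s)) : ℂ) else 0

/-- The diagonal operator `h_i·`, acting on `v_t` by the eigenvalue `m_i(t)`. -/
def opH (i : N) : Module.End ℂ (Elt adj pos k extra → ℂ) :=
  Matrix.mulVecLin (Matrix.diagonal fun t => ((mwt i t : ℤ) : ℂ))

end CL

/-! ### Type `E₇` data -/

/-- The nodes `1, 2, 3, 4, 5, 5', 6'` of the `E₇` Dynkin diagram. -/
inductive N7 : Type
  | n1 | n2 | n3 | n4 | n5 | n5p | n6p
  deriving DecidableEq

instance : Fintype N7 where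
  elems := Finset.mk (↑[N7.n1, N7.n2, N7.n3, N7.n4, N7.n5, N7.n5p, N7.n6p]) (by decide)
  complete := by intro x; cases x <;> decide

open N7

/-- Adjacency in the `E₇` Dynkin diagram: edges `1-2, 2-3, 3-4, 4-5, 4-5', 5'-6'`. -/
abbrev adj7 : N7 → N7 → Prop := fun a b =>
  (a, b) ∈ ([(n1, n2), (n2, n3), (n3, n4), (n4, n5), (n4, n5p), (n5p, n6p)] : List (N7 × N7)) ∨
  (b, a) ∈ ([(n1, n2), (n2, n3), (n3, n4), (n4, n5), (n4, n5p), (n5p, n6p)] : List (N7 × N7))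

/-- The 27 (color, rank) positions of the minuscule poset `P₇ = P_{E₇}(ω₁)`. -/
def pos7 : Finset (N7 × ℕ) :=
  {(n1, 0), (n2, 1), (n3, 2), (n4, 3), (n5, 4), (n5p, 4), (n4, 5), (n6p, 5), (n3, 6),
   (n5p, 6), (n2, 7), (n4, 7), (n1, 8), (n3, 8), (n5, 8), (n2, 9), (n4, 9), (n3, 10),
   (n5p, 10), (n4, 11), (n6p, 11), (n5, 12), (n5p, 12), (n4, 13), (n3, 14), (n2, 15), (n1, 16)}

/-- The lattice `L7(k) = L_{E₇}(kω₁)` of order-reversing labellings of `P₇` by `{0,…,k}`. -/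
abbrev L7 (k : ℕ) : Type := CL.Elt adj7 pos7 k (fun _ => True)

/-- The Cartan matrix of type `E₇`, indexed by the nodes. -/
def A7 : N7 → N7 → ℤ := fun i j => if i = j then 2 else if adj7 i j then -1 else 0

/-- The maximal element of `L7(k)`: the constant function with value `k`. -/
def top7 (k : ℕ) : L7 k :=
  ⟨fun _ => k, fun _ => le_rfl, fun _ _ _ => le_rfl, trivial⟩

attribute [local instance 100] LieRing.ofAssociativeRing

/-!
Fix a color `i`. Shift each label of a labelling by half the rank of its position, and let `ξ p` be
the shifted labels at the positions `p` of color `i`. The labels at the neighboring positions bound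
the label at `p`, which puts `ξ p` in an interval `[b p + 1, a p]`, and because the poset is
minuscule these intervals do not overlap. The coefficient of the edge at `p` is, up to sign, the
residue at `ξ p` of the rational function `∏ (z - a q) (z - b q) / ∏ (z - ξ q) (z - ξ q + 1)`, and
the residue at `ξ p - 1` is the coefficient of the edge ending there. It is positive by
interlacing, and the sum of all residues gives `[x_i, y_i] = h_i`. Moreover the numerator is a
product over the neighboring positions up to a boundary factor, so that each coefficient is a
product of pairwise interactions between positions; exchanging two of them gives the diamond
relations, which make the other entries of `[x_i, y_j]` vanish. The remaining relations are weight
bookkeeping, except for the nilpotency relations, which follow from the representation theory of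
`sl₂` because `End V` is finite-dimensional.

A vector killed by all raising operators is a multiple of the top basis vector, so every nonzero
subspace invariant under them contains that vector. As `Y_i` is the transpose of `X_i`, this
applies to an invariant subspace and to its orthogonal complement for the symmetric bilinear form,
which cannot both contain it.
-/

namespace CL

section Residues

open Polynomial

variable {F ι : Type*} [Field F] [DecidableEq ι]

/- Both sides are the next-to-leading coefficient of `∏ (X - w q) - ∏ (X - v q)`, the left one
by Lagrange interpolation at the nodes `v p`. -/
theorem sum_prod_sub_div_prod_sub_of_injOn {s : Finset ι} {v : ι → F} (hv : Set.InjOn v s)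
    (w : ι → F) :
    ∑ p ∈ s, (∏ q ∈ s, (v p - w q)) / ∏ q ∈ s.erase p, (v p - v q) = ∑ p ∈ s, (v p - w p) := by
  rcases s.eq_empty_or_nonempty with rfl | hs
  · simp
  have degree_prod_X_sub_C (u : ι → F) : (∏ q ∈ s, (X - C (u q)) : F[X]).degree = s.card := by
    rw [degree_prod]; simp
  have degree_lt :
      (∏ q ∈ s, (X - C (w q)) - ∏ q ∈ s, (X - C (v q)) : F[X]).degree < s.card := by
    rw [← degree_prod_X_sub_C w]
    exact degree_sub_lt_left ((degree_prod_X_sub_C w).trans (degree_prod_X_sub_C v).symm)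
      (monic_prod_X_sub_C w s).ne_zero
      ((monic_prod_X_sub_C w s).leadingCoeff.trans (monic_prod_X_sub_C v s).leadingCoeff.symm)
  have coeff_eq := Lagrange.coeff_eq_sum hv degree_lt
  rw [coeff_sub, prod_X_sub_C_coeff_card_pred _ _ hs.card_pos,
    prod_X_sub_C_coeff_card_pred _ _ hs.card_pos, neg_sub_neg, ← Finset.sum_sub_distrib] at coeff_eq
  rw [coeff_eq]
  refine Finset.sum_congr rfl fun p hp => ?_
  have prod_eq_zero : ∏ q ∈ s, eval (v p) (X - C (v q)) = 0 := Finset.prod_eq_zero hp (by simp)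
  rw [eval_sub, eval_prod, eval_prod, prod_eq_zero]
  simp

theorem sum_prod_sub_div_prod_sub (s : Finset ι) (v w : ι → F)
    (h : ∀ p ∈ s, v p ≠ w p → ∀ q ∈ s, q ≠ p → v p ≠ v q) :
    ∑ p ∈ s, (∏ q ∈ s, (v p - w q)) / ∏ q ∈ s.erase p, (v p - v q) = ∑ p ∈ s, (v p - w p) := by
  classical
  let t := s.filter fun p => v p ≠ w p
  have ht_sub : t ⊆ s := Finset.filter_subset _ _
  have eq_of_notMem {q : ι} (hq : q ∈ s) (hqt : q ∉ t) : v q = w q := by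
    by_contra hne
    exact hqt (Finset.mem_filter.2 ⟨hq, hne⟩)
  have injOn_t : Set.InjOn v t := fun p hp q hq hpq => by
    by_contra hne
    obtain ⟨hps, hpw⟩ := Finset.mem_filter.1 hp
    exact h p hps hpw q (ht_sub hq) (Ne.symm hne) hpq
  rw [← Finset.sum_subset ht_sub fun p hp hpt => by
      rw [Finset.prod_eq_zero hp (sub_eq_zero.2 (eq_of_notMem hp hpt)), zero_div],
    ← Finset.sum_subset ht_sub fun p hp hpt => sub_eq_zero.2 (eq_of_notMem hp hpt),
    ← sum_prod_sub_div_prod_sub_of_injOn injOn_t w]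
  refine Finset.sum_congr rfl fun p hp => ?_
  obtain ⟨hps, hpw⟩ := Finset.mem_filter.1 hp
  have erase_sdiff : s.erase p \ t.erase p = s \ t := by
    rw [← Finset.erase_sdiff_distrib,
      Finset.erase_eq_of_notMem fun hpt => (Finset.mem_sdiff.1 hpt).2 hp]
  rw [← Finset.prod_sdiff ht_sub, ← Finset.prod_sdiff (Finset.erase_subset_erase p ht_sub),
    erase_sdiff, Finset.prod_congr rfl fun q hq => by
      rw [← eq_of_notMem (Finset.mem_sdiff.1 hq).1 (Finset.mem_sdiff.1 hq).2]]
  refine mul_div_mul_left _ _ (Finset.prod_ne_zero_iff.2 fun q hq => ?_)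
  obtain ⟨hqs, hqt⟩ := Finset.mem_sdiff.1 hq
  exact sub_ne_zero.2 (h p hps hpw q hqs fun hqp => hqt (hqp ▸ hp))

end Residues

section Serre

open LieModule

theorem toEnd_pow_apply_eq_zero_of_sl2_relations {K L M : Type*} [Field K] [CharZero K]
    [LieRing L] [LieAlgebra K L] [AddCommGroup M] [Module K M] [LieRingModule L M]
    [LieModule K L M] [FiniteDimensional K M] {e f h : L} (hef : ⁅e, f⁆ = h)
    (hhe : ⁅h, e⁆ = (2 : ℤ) • e) (hhf : ⁅h, f⁆ = -((2 : ℤ) • f)) {m : M} {n : ℕ}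
    (hfm : ⁅f, m⁆ = 0) (hhm : ⁅h, m⁆ = -(n : ℤ) • m) :
    (toEnd K L M e ^ (n + 1)) m = 0 := by
  rcases eq_or_ne h 0 with rfl | h_ne
  · have e_eq : e = 0 := by
      have : (2 : K) • e = 0 := by rw [ofNat_smul_eq_nsmul K 2 e, ← ofNat_zsmul, ← hhe, zero_lie]
      simpa using this
    simp [e_eq]
  rcases eq_or_ne m 0 with rfl | m_ne
  · simp
  have triple : IsSl2Triple (-h) f e :=
    ⟨neg_ne_zero.2 h_ne, by rw [← hef, lie_skew], by rw [neg_lie, hhf, neg_neg]; norm_cast,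
      by rw [neg_lie, hhe]; norm_cast⟩
  have primitive : triple.HasPrimitiveVectorWith m (n : K) :=
    ⟨m_ne, by rw [neg_lie, hhm, neg_smul, neg_neg, natCast_zsmul, Nat.cast_smul_eq_nsmul], hfm⟩
  exact primitive.pow_toEnd_f_eq_zero_of_eq_nat rfl

variable {R L L' : Type*} [CommRing R] [LieRing L] [LieAlgebra R L] [LieRing L'] [LieAlgebra R L']

theorem map_ad_pow (ψ : L →ₗ⁅R⁆ L') (u z : L) (n : ℕ) :
    ψ ((LieAlgebra.ad R L u ^ n) z) = (LieAlgebra.ad R L' (ψ u) ^ n) (ψ z) := by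
  have commute : LieAlgebra.ad R L' (ψ u) ∘ₗ (ψ : L →ₗ[R] L') = ψ ∘ₗ LieAlgebra.ad R L u :=
    LinearMap.ext fun z => (ψ.map_lie u z).symm
  exact (LinearMap.congr_fun (Module.End.commute_pow_left_of_commute commute n) z).symm

theorem exists_lieHom_quotient {J : LieIdeal R L} (ψ : L →ₗ⁅R⁆ L') (hJ : J ≤ ψ.ker) :
    ∃ φ : L ⧸ J →ₗ⁅R⁆ L', ∀ z, φ (LieSubmodule.Quotient.mk z) = ψ z :=
  ⟨{ J.toSubmodule.liftQ (ψ : L →ₗ[R] L') fun _ hz => hJ hz with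
      map_lie' := by
        rintro ⟨u⟩ ⟨w⟩
        exact ψ.map_lie u w }, fun _ => rfl⟩

/-- The Serre relations for `A` other than the nilpotency relations, which these imply in a
finite-dimensional Lie algebra. -/
structure ChevalleyRelations {I : Type*} (A : I → I → ℤ) (x y h : I → L) : Prop where
  lie_h_h (i j : I) : ⁅h i, h j⁆ = 0
  lie_x_y (i : I) : ⁅x i, y i⁆ = h i
  lie_x_y_of_ne {i j : I} (hij : i ≠ j) : ⁅x i, y j⁆ = 0
  lie_h_x (i j : I) : ⁅h i, x j⁆ = A j i • x j
  lie_h_y (i j : I) : ⁅h i, y j⁆ = -(A j i • y j)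

namespace ChevalleyRelations

variable {I : Type*} {A : I → I → ℤ}

theorem swap {x y h : I → L} (rel : ChevalleyRelations A x y h) :
    ChevalleyRelations A y x (-h) where
  lie_h_h i j := by simp [rel.lie_h_h]
  lie_x_y i := by rw [← lie_skew, rel.lie_x_y, Pi.neg_apply]
  lie_x_y_of_ne hij := by rw [← lie_skew, rel.lie_x_y_of_ne hij.symm, neg_zero]
  lie_h_x i j := by simp [rel.lie_h_y]
  lie_h_y i j := by simp [rel.lie_h_x]

theorem ad_pow_x {K g : Type*} [Field K] [CharZero K] [LieRing g] [LieAlgebra K g]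
    [FiniteDimensional K g] {x y h : I → g} (rel : ChevalleyRelations A x y h) {i j : I}
    (hij : i ≠ j) (hii : A i i = 2) (hA : A j i ≤ 0) :
    (LieAlgebra.ad K g (x i) ^ (1 - A j i).toNat) (x j) = 0 := by
  have exponent : (1 - A j i).toNat = (-A j i).toNat + 1 := by lia
  rw [exponent]
  refine toEnd_pow_apply_eq_zero_of_sl2_relations (rel.lie_x_y i)
    (by rw [rel.lie_h_x, hii]) (by rw [rel.lie_h_y, hii])
    (by rw [← lie_skew, rel.lie_x_y_of_ne hij.symm, neg_zero]) ?_
  rw [rel.lie_h_x, Int.toNat_of_nonneg (neg_nonneg.2 hA), neg_neg]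

theorem exists_gLie_hom {I : Type} {g : Type*} [LieRing g] [LieAlgebra ℂ g]
    [FiniteDimensional ℂ g] {A : I → I → ℤ} {x y h : I → g} (rel : ChevalleyRelations A x y h)
    (hdiag : ∀ i, A i i = 2) (hoff : ∀ i j, i ≠ j → A j i ≤ 0) :
    ∃ φ : gLie A →ₗ⁅ℂ⁆ g, ∀ i, φ (px A i) = x i ∧ φ (py A i) = y i ∧ φ (ph A i) = h i := by
  let onGen : SGen I → g := fun
    | .X i => x i
    | .Y i => y i
    | .H i => h i
  let ψ : FreeLieAlgebra ℂ (SGen I) →ₗ⁅ℂ⁆ g := FreeLieAlgebra.lift ℂ onGen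
  have map_gx (i : I) : ψ (gx i) = x i := FreeLieAlgebra.lift_of_apply onGen _
  have map_gy (i : I) : ψ (gy i) = y i := FreeLieAlgebra.lift_of_apply onGen _
  have map_gh (i : I) : ψ (gh i) = h i := FreeLieAlgebra.lift_of_apply onGen _
  have serreIdeal_le : serreIdeal A ≤ ψ.ker := by
    refine (LieSubmodule.lieSpan_le).2 fun z hz => LieHom.mem_ker.2 ?_
    rcases hz with (((((⟨i, j, rfl⟩ | ⟨i, rfl⟩) | ⟨i, j, hij, rfl⟩) | ⟨i, j, rfl⟩) | ⟨i, j, rfl⟩) |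
      ⟨i, j, hij, rfl⟩) | ⟨i, j, hij, rfl⟩
    · rw [LieHom.map_lie, map_gh, map_gh, rel.lie_h_h]
    · rw [map_sub, LieHom.map_lie, map_gx, map_gy, map_gh, rel.lie_x_y, sub_self]
    · rw [LieHom.map_lie, map_gx, map_gy, rel.lie_x_y_of_ne hij]
    · rw [map_sub, LieHom.map_lie, map_zsmul, map_gh, map_gx, rel.lie_h_x, sub_self]
    · rw [map_add, LieHom.map_lie, map_zsmul, map_gh, map_gy, rel.lie_h_y, neg_add_cancel]
    · rw [map_ad_pow, map_gx, map_gx, rel.ad_pow_x hij (hdiag i) (hoff i j hij)]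
    · rw [map_ad_pow, map_gy, map_gy, rel.swap.ad_pow_x hij (hdiag i) (hoff i j hij)]
  obtain ⟨φ, hφ⟩ := exists_lieHom_quotient ψ serreIdeal_le
  exact ⟨φ, fun i => ⟨(hφ _).trans (map_gx i), (hφ _).trans (map_gy i), (hφ _).trans (map_gh i)⟩⟩

end ChevalleyRelations

end Serre

section ColoredPoset

variable {N : Type} (adj : N → N → Prop) [DecidableRel adj] (pos : Finset (N × ℕ))

/-- The positions whose color is adjacent to `i`. -/
def neighbors (i : N) : Finset (N × ℕ) := {p ∈ pos | adj i p.1}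

/-- The positions covering `p` in the order generated by `step`. -/
def upperCovers (p : N × ℕ) : Finset (N × ℕ) := {q ∈ neighbors adj pos p.1 | q.2 = p.2 + 1}

/-- The positions covered by `p` in the order generated by `step`. -/
def lowerCovers (p : N × ℕ) : Finset (N × ℕ) := {q ∈ neighbors adj pos p.1 | q.2 + 1 = p.2}

variable {adj pos} in
theorem mem_upperCovers {p q : N × ℕ} (hp : p ∈ pos) :
    q ∈ upperCovers adj pos p ↔ step adj pos p q := by
  simp only [upperCovers, neighbors, Finset.mem_filter, step]
  tauto

variable {adj pos} in
theorem mem_lowerCovers (hadj : ∀ i j, adj i j → adj j i) {p q : N × ℕ} (hp : p ∈ pos) :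
    q ∈ lowerCovers adj pos p ↔ step adj pos q p := by
  simp only [lowerCovers, neighbors, Finset.mem_filter, step]
  have := hadj p.1 q.1
  have := hadj q.1 p.1
  tauto

/-- The positions of color `i`. -/
def colorClass [DecidableEq N] (i : N) : Finset (N × ℕ) := {p ∈ pos | p.1 = i}

/-- A ranked colored poset behaving like the minuscule poset of a simply laced Dynkin diagram, with
`bot` the color of its least element and `top` its greatest element: strictly between two
consecutive elements of the same color there are exactly two elements of adjacent color, and below
the first (above the last) element of a color there is exactly one, or none if that element is the
least (greatest) one. -/
structure IsMinuscule [DecidableEq N] (bot : N) (top : N × ℕ) : Prop where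
  symm (i j : N) : adj i j → adj j i
  irrefl (i : N) : ¬adj i i
  exists_color (i : N) : ∃ p ∈ pos, p.1 = i
  rank_ne : ∀ p ∈ pos, ∀ q ∈ neighbors adj pos p.1, q.2 ≠ p.2
  interval : ∀ p ∈ pos, ∀ q ∈ colorClass pos p.1, p.2 < q.2 →
    (∀ r ∈ colorClass pos p.1, ¬(p.2 < r.2 ∧ r.2 < q.2)) →
    ∃ y ∈ upperCovers adj pos p, ∃ z ∈ lowerCovers adj pos q, y ≠ z ∧
      (neighbors adj pos p.1).filter (fun r => p.2 < r.2 ∧ r.2 < q.2) = {y, z} ∧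
      (y.2 = z.2 ∨ y.1 = z.1)
  below_first : ∀ p ∈ pos, (∀ r ∈ colorClass pos p.1, p.2 ≤ r.2) →
    if p.1 = bot then p.2 = 0 else
      ∃ y ∈ lowerCovers adj pos p, (neighbors adj pos p.1).filter (·.2 < p.2) = {y}
  above_last : ∀ p ∈ pos, (∀ r ∈ colorClass pos p.1, r.2 ≤ p.2) →
    if p.1 = top.1 then p.2 = top.2 ∧ (neighbors adj pos p.1).filter (p.2 < ·.2) = ∅ else
      ∃ y ∈ upperCovers adj pos p, (neighbors adj pos p.1).filter (p.2 < ·.2) = {y}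

end ColoredPoset

section Labelling

variable {N : Type} [DecidableEq N] {adj : N → N → Prop} {pos : Finset (N × ℕ)} {k : ℕ}

/-- The lattice `L(k)` of order-reversing labellings of `pos` by `{0, …, k}`. -/
abbrev Labelling (adj : N → N → Prop) (pos : Finset (N × ℕ)) (k : ℕ) : Type :=
  Elt adj pos k fun _ => True

/-- The label of `t` at `p`, with value `0` off `pos`. -/
def label (t : Labelling adj pos k) (p : N × ℕ) : ℕ := if hp : p ∈ pos then t.1 ⟨p, hp⟩ else 0

theorem label_of_mem (t : Labelling adj pos k) {p : N × ℕ} (hp : p ∈ pos) :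
    label t p = t.1 ⟨p, hp⟩ := dif_pos hp

theorem label_of_notMem (t : Labelling adj pos k) {p : N × ℕ} (hp : p ∉ pos) : label t p = 0 :=
  dif_neg hp

theorem label_injective : Function.Injective (label : Labelling adj pos k → N × ℕ → ℕ) :=
  fun s t hst => Subtype.ext <| funext fun x => by
    rw [← label_of_mem s x.2, ← label_of_mem t x.2, hst]

theorem label_le (t : Labelling adj pos k) (p : N × ℕ) : label t p ≤ k := by
  by_cases hp : p ∈ pos
  · exact (label_of_mem t hp).trans_le (t.2.1 _)
  · exact (label_of_notMem t hp).trans_le (Nat.zero_le k)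

theorem label_le_of_step (t : Labelling adj pos k) {p q : N × ℕ} (h : step adj pos p q) :
    label t q ≤ label t p := by
  rw [label_of_mem t h.1, label_of_mem t h.2.1]
  exact t.2.2.1 _ _ (.single h)

theorem exists_label_eq {g : N × ℕ → ℕ} (g_le : ∀ p, g p ≤ k) (g_of_notMem : ∀ p ∉ pos, g p = 0)
    (g_step : ∀ p q, step adj pos p q → g q ≤ g p) : ∃ t : Labelling adj pos k, label t = g := by
  have antitone (p q : N × ℕ) (hpq : ple adj pos p q) : g q ≤ g p := by
    induction hpq with
    | refl => exact le_rfl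
    | tail _ hqr ih => exact (g_step _ _ hqr).trans ih
  let t : Labelling adj pos k :=
    ⟨fun x => g x.1, fun x => g_le x.1, fun x y hyx => antitone y.1 x.1 hyx, trivial⟩
  refine ⟨t, funext fun p => ?_⟩
  by_cases hp : p ∈ pos
  · exact label_of_mem t hp
  · rw [label_of_notMem t hp, g_of_notMem p hp]

/-- The factor, for `L(k)`, by which the least element of `pos` enters the product identity
`prod_upperBound_mul_lowerBound` of its color. -/
def bottomFactor {M : Type*} [One M] (f : ℕ → ℕ → M) (k : ℕ) (bot i : N) : M :=
  if i = bot then f k 0 else 1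

/-- The factor by which the greatest element of `pos` enters the product identity
`prod_upperBound_mul_lowerBound` of its color. -/
def topFactor {M : Type*} [One M] (f : ℕ → ℕ → M) (top : N × ℕ) (i : N) : M :=
  if i = top.1 then f 0 (top.2 + 2) else 1

variable [DecidableRel adj]

/-- The bound on the label of `t` at `p` imposed by the labels at the elements covered by `p`. -/
def upperBound (t : Labelling adj pos k) (p : N × ℕ) : ℕ :=
  (lowerCovers adj pos p).fold min k (label t)

/-- The bound on the label of `t` at `p` imposed by the labels at the elements covering `p`. -/
def lowerBound (t : Labelling adj pos k) (p : N × ℕ) : ℕ :=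
  (upperCovers adj pos p).sup (label t)

theorem le_upperBound_iff {t : Labelling adj pos k} {p : N × ℕ} {n : ℕ} :
    n ≤ upperBound t p ↔ n ≤ k ∧ ∀ q ∈ lowerCovers adj pos p, n ≤ label t q :=
  Finset.le_fold_min n

theorem lowerBound_le_iff {t : Labelling adj pos k} {p : N × ℕ} {n : ℕ} :
    lowerBound t p ≤ n ↔ ∀ q ∈ upperCovers adj pos p, label t q ≤ n :=
  Finset.sup_le_iff

theorem upperBound_le_label (t : Labelling adj pos k) {p q : N × ℕ}
    (hq : q ∈ lowerCovers adj pos p) : upperBound t p ≤ label t q :=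
  (le_upperBound_iff.1 le_rfl).2 q hq

theorem label_le_lowerBound (t : Labelling adj pos k) {p q : N × ℕ}
    (hq : q ∈ upperCovers adj pos p) : label t q ≤ lowerBound t p :=
  Finset.le_sup hq

theorem lowerBound_le_label (t : Labelling adj pos k) {p : N × ℕ} (hp : p ∈ pos) :
    lowerBound t p ≤ label t p :=
  lowerBound_le_iff.2 fun _ hq => label_le_of_step t ((mem_upperCovers hp).1 hq)

namespace IsMinuscule

variable {bot : N} {top : N × ℕ} (h : IsMinuscule adj pos bot top)
include h

theorem label_le_upperBound (t : Labelling adj pos k) {p : N × ℕ} (hp : p ∈ pos) :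
    label t p ≤ upperBound t p :=
  le_upperBound_iff.2
    ⟨label_le t p, fun _ hq => label_le_of_step t ((mem_lowerCovers h.symm hp).1 hq)⟩

theorem rank_add_two_le_and_upperBound_le_lowerBound (t : Labelling adj pos k) {p q : N × ℕ}
    (hp : p ∈ pos) (hq : q ∈ colorClass pos p.1) (hpq : p.2 < q.2) :
    p.2 + 2 ≤ q.2 ∧ upperBound t q ≤ lowerBound t p := by
  induction hn : q.2 - p.2 using Nat.strong_induction_on generalizing p q with
  | _ n ih =>
  subst hn
  by_cases consecutive : ∀ r ∈ colorClass pos p.1, ¬(p.2 < r.2 ∧ r.2 < q.2)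
  · obtain ⟨y, hy, z, hz, y_ne, interval_eq, h_rank | h_color⟩ :=
      h.interval p hp q hq hpq consecutive
    all_goals
      have hyz : z ∈ neighbors adj pos p.1 ∧ p.2 < z.2 ∧ z.2 < q.2 := Finset.mem_filter.1
        (interval_eq.symm ▸ Finset.mem_insert_of_mem (Finset.mem_singleton_self z))
      have rank_y := (Finset.mem_filter.1 hy).2
      have rank_z := (Finset.mem_filter.1 hz).2
    · have hz' : z ∈ upperCovers adj pos p :=
        Finset.mem_filter.2 ⟨hyz.1, h_rank.symm.trans rank_y⟩
      exact ⟨by lia, (upperBound_le_label t hz).trans (label_le_lowerBound t hz')⟩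
    · have hy_pos : y ∈ pos := ((mem_upperCovers hp).1 hy).2.1
      have hz_pos : z ∈ pos := (Finset.mem_filter.1 hyz.1).1
      have rank_lt : y.2 < z.2 := by
        have : y.2 ≠ z.2 := fun h_rank => y_ne (Prod.ext h_color h_rank)
        lia
      have bound_le := (ih _ (by lia) hy_pos
        (Finset.mem_filter.2 ⟨hz_pos, h_color.symm⟩) rank_lt rfl).2
      refine ⟨by lia, ?_⟩
      calc upperBound t q ≤ label t z := upperBound_le_label t hz
        _ ≤ upperBound t z := h.label_le_upperBound t hz_pos
        _ ≤ lowerBound t y := bound_le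
        _ ≤ label t y := lowerBound_le_label t hy_pos
        _ ≤ lowerBound t p := label_le_lowerBound t hy
  · push Not at consecutive
    obtain ⟨r, hr, hpr, hrq⟩ := consecutive
    obtain ⟨hr_pos, hr_color⟩ := Finset.mem_filter.1 hr
    have lower := ih _ (by lia) hp hr hpr rfl
    have upper := ih _ (by lia) hr_pos (hr_color ▸ hq) hrq rfl
    refine ⟨by lia, upper.2.trans ?_⟩
    exact (lowerBound_le_label t hr_pos).trans ((h.label_le_upperBound t hr_pos).trans lower.2)

section GapIdentity

variable {M : Type*} [CommMonoid M] (f : ℕ → ℕ → M) (t : Labelling adj pos k)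

/- Let `y` and `z` be the two elements of adjacent color between `p` and `q`. If they have the same
rank, the bounds are the maximum and the minimum of the labels there; otherwise they are these
labels themselves. -/
theorem lowerBound_mul_upperBound {p q : N × ℕ} (hp : p ∈ pos) (hq : q ∈ colorClass pos p.1)
    (hpq : p.2 < q.2) (consecutive : ∀ r ∈ colorClass pos p.1, ¬(p.2 < r.2 ∧ r.2 < q.2)) :
    f (lowerBound t p) (p.2 + 2) * f (upperBound t q) q.2 =
      ∏ y ∈ neighbors adj pos p.1 with p.2 < y.2 ∧ y.2 < q.2, f (label t y) (y.2 + 1) := by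
  obtain ⟨y, hy, z, hz, y_ne, interval_eq, -⟩ := h.interval p hp q hq hpq consecutive
  have rank_y := (Finset.mem_filter.1 hy).2
  have rank_z := (Finset.mem_filter.1 hz).2
  have rank_le := (h.rank_add_two_le_and_upperBound_le_lowerBound t hp hq hpq).1
  have upperCovers_eq : upperCovers adj pos p = ({y, z} : Finset _).filter (·.2 = p.2 + 1) := by
    rw [← interval_eq, Finset.filter_filter, upperCovers]
    exact Finset.filter_congr fun r _ => by lia
  have lowerCovers_eq : lowerCovers adj pos q = ({y, z} : Finset _).filter (·.2 + 1 = q.2) := by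
    rw [← interval_eq, Finset.filter_filter, lowerCovers, (Finset.mem_filter.1 hq).2]
    exact Finset.filter_congr fun r _ => by lia
  rw [interval_eq, Finset.prod_pair y_ne]
  by_cases h_rank : y.2 = z.2
  · have lowerBound_eq : lowerBound t p = max (label t y) (label t z) := by
      rw [lowerBound, upperCovers_eq, Finset.filter_true_of_mem (by grind)]
      simp
    have upperBound_eq : upperBound t q = min (label t y) (label t z) := by
      rw [upperBound, lowerCovers_eq, Finset.filter_true_of_mem (by grind),
        Finset.fold_insert (by simpa using y_ne), Finset.fold_singleton, min_eq_left (label_le t z)]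
    rw [lowerBound_eq, upperBound_eq, ← h_rank, show p.2 + 2 = y.2 + 1 by lia,
      show q.2 = y.2 + 1 by lia]
    rcases le_total (label t y) (label t z) with hle | hle <;> simp [hle, mul_comm]
  · have lowerBound_eq : lowerBound t p = label t y := by
      rw [lowerBound, upperCovers_eq, Finset.filter_insert, Finset.filter_singleton]
      simp [rank_y, show z.2 ≠ p.2 + 1 by lia]
    have upperBound_eq : upperBound t q = label t z := by
      rw [upperBound, lowerCovers_eq, Finset.filter_insert, Finset.filter_singleton]
      simp [rank_z, show y.2 + 1 ≠ q.2 by lia, label_le]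
    rw [lowerBound_eq, upperBound_eq, rank_y, ← rank_z]

theorem upperBound_of_first {p : N × ℕ} (hp : p ∈ pos)
    (first : ∀ r ∈ colorClass pos p.1, p.2 ≤ r.2) :
    f (upperBound t p) p.2 =
      (∏ y ∈ neighbors adj pos p.1 with y.2 < p.2, f (label t y) (y.2 + 1)) *
        bottomFactor f k bot p.1 := by
  have below := h.below_first p hp first
  have subset : lowerCovers adj pos p ⊆ (neighbors adj pos p.1).filter (·.2 < p.2) :=
    Finset.monotone_filter_right _ fun r _ hr => by lia
  rw [bottomFactor]
  split_ifs at below ⊢ with h_bot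
  · simp [upperBound, lowerCovers, below]
  · obtain ⟨y, hy, below_eq⟩ := below
    have rank_y := (Finset.mem_filter.1 hy).2
    have lowerCovers_eq : lowerCovers adj pos p = {y} :=
      (below_eq ▸ subset).antisymm (Finset.singleton_subset_iff.2 hy)
    simp [below_eq, upperBound, lowerCovers_eq, label_le, rank_y]

theorem lowerBound_of_last {p : N × ℕ} (hp : p ∈ pos)
    (last : ∀ r ∈ colorClass pos p.1, r.2 ≤ p.2) :
    f (lowerBound t p) (p.2 + 2) =
      (∏ y ∈ neighbors adj pos p.1 with p.2 < y.2, f (label t y) (y.2 + 1)) *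
        topFactor f top p.1 := by
  have above := h.above_last p hp last
  have subset : upperCovers adj pos p ⊆ (neighbors adj pos p.1).filter (p.2 < ·.2) :=
    Finset.monotone_filter_right _ fun r _ hr => by lia
  rw [topFactor]
  split_ifs at above ⊢ with h_top
  · obtain ⟨rank_eq, above_eq⟩ := above
    rw [above_eq, Finset.prod_empty, one_mul, ← rank_eq, lowerBound,
      Finset.subset_empty.1 (subset.trans above_eq.subset), Finset.sup_empty, Nat.bot_eq_zero]
  · obtain ⟨y, hy, above_eq⟩ := above
    have rank_y := (Finset.mem_filter.1 hy).2
    have upperCovers_eq : upperCovers adj pos p = {y} :=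
      (above_eq ▸ subset).antisymm (Finset.singleton_subset_iff.2 hy)
    simp [above_eq, lowerBound, upperCovers_eq, rank_y]

theorem prod_below_mul_upperBound {p : N × ℕ} (hp : p ∈ pos) :
    (∏ x ∈ colorClass pos p.1 with x.2 < p.2,
        f (upperBound t x) x.2 * f (lowerBound t x) (x.2 + 2)) * f (upperBound t p) p.2 =
      (∏ y ∈ neighbors adj pos p.1 with y.2 < p.2, f (label t y) (y.2 + 1)) *
        bottomFactor f k bot p.1 := by
  induction hn : p.2 using Nat.strong_induction_on generalizing p with
  | _ n ih =>
  subst hn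
  rcases ((colorClass pos p.1).filter (·.2 < p.2)).eq_empty_or_nonempty with h_empty | h_ne
  · rw [h_empty, Finset.prod_empty, one_mul]
    exact h.upperBound_of_first f t hp fun r hr => not_lt.1 fun hrp =>
      Finset.eq_empty_iff_forall_notMem.1 h_empty r (Finset.mem_filter.2 ⟨hr, hrp⟩)
  · obtain ⟨q, hq, q_max⟩ := Finset.exists_max_image _ Prod.snd h_ne
    obtain ⟨hq_color, hqp⟩ := Finset.mem_filter.1 hq
    obtain ⟨hq_pos, color_eq⟩ := Finset.mem_filter.1 hq_color
    have consecutive : ∀ r ∈ colorClass pos q.1, ¬(q.2 < r.2 ∧ r.2 < p.2) := fun r hr hqrp =>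
      (q_max r (Finset.mem_filter.2 ⟨color_eq ▸ hr, hqrp.2⟩)).not_gt hqrp.1
    have below_eq : (colorClass pos p.1).filter (·.2 < p.2) =
        insert q ((colorClass pos p.1).filter (·.2 < q.2)) := by
      ext r
      have := color_eq ▸ consecutive r
      have (hr : r ∈ colorClass pos p.1) (hrq : r.2 = q.2) : r = q :=
        Prod.ext ((Finset.mem_filter.1 hr).2.trans color_eq.symm) hrq
      grind
    have neighbors_eq : (neighbors adj pos p.1).filter (·.2 < p.2) =
        (neighbors adj pos p.1).filter (·.2 < q.2) ∪
          (neighbors adj pos p.1).filter fun y => q.2 < y.2 ∧ y.2 < p.2 := by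
      ext r
      have := color_eq ▸ h.rank_ne q hq_pos r
      grind
    have disjoint : Disjoint ((neighbors adj pos p.1).filter (·.2 < q.2))
        ((neighbors adj pos p.1).filter fun y => q.2 < y.2 ∧ y.2 < p.2) :=
      Finset.disjoint_filter.2 fun r _ hrq hqr => hrq.not_gt hqr.1
    have prod_below_q := ih q.2 hqp hq_pos rfl
    have between := h.lowerBound_mul_upperBound f t hq_pos
      (Finset.mem_filter.2 ⟨hp, color_eq.symm⟩) hqp consecutive
    rw [color_eq] at prod_below_q between
    rw [below_eq, neighbors_eq, Finset.prod_insert (by simp), Finset.prod_union disjoint, ← between,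
      mul_right_comm _ _ (bottomFactor f k bot p.1), ← prod_below_q]
    ac_rfl

theorem prod_upperBound_mul_lowerBound (i : N) :
    ∏ x ∈ colorClass pos i, f (upperBound t x) x.2 * f (lowerBound t x) (x.2 + 2) =
      (∏ y ∈ neighbors adj pos i, f (label t y) (y.2 + 1)) * bottomFactor f k bot i *
        topFactor f top i := by
  obtain ⟨p₀, hp₀, rfl⟩ := h.exists_color i
  obtain ⟨p, hp, p_max⟩ := Finset.exists_max_image (colorClass pos p₀.1) Prod.snd
    ⟨p₀, Finset.mem_filter.2 ⟨hp₀, rfl⟩⟩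
  obtain ⟨hp_pos, color_eq⟩ := Finset.mem_filter.1 hp
  rw [← color_eq] at p_max ⊢
  have class_eq : colorClass pos p.1 = insert p ((colorClass pos p.1).filter (·.2 < p.2)) := by
    ext r
    have := p_max r
    have (hr : r ∈ colorClass pos p.1) (hrp : r.2 = p.2) : r = p :=
      Prod.ext (Finset.mem_filter.1 hr).2 hrp
    have := color_eq ▸ hp
    grind
  have neighbors_eq : neighbors adj pos p.1 =
      (neighbors adj pos p.1).filter (·.2 < p.2) ∪ (neighbors adj pos p.1).filter (p.2 < ·.2) := by
    ext r
    have := h.rank_ne p hp_pos r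
    grind
  have disjoint : Disjoint ((neighbors adj pos p.1).filter (·.2 < p.2))
      ((neighbors adj pos p.1).filter (p.2 < ·.2)) :=
    Finset.disjoint_filter.2 fun r _ hrp hpr => hrp.not_gt hpr
  rw [class_eq, neighbors_eq, Finset.prod_insert (by simp), Finset.prod_union disjoint,
    mul_right_comm _ _ (bottomFactor f k bot p.1), ← h.prod_below_mul_upperBound f t hp_pos,
    h.lowerBound_of_last f t hp_pos p_max]
  ac_rfl

end GapIdentity

end IsMinuscule

end Labelling

section Covering

variable {N : Type} {adj : N → N → Prop} {pos : Finset (N × ℕ)}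

theorem ne_of_step {x y : N × ℕ} (hxy : step adj pos x y) : x ≠ y := by
  rintro rfl
  exact absurd hxy.2.2.2 (by lia)

variable [DecidableEq N] {k : ℕ} {p q : N × ℕ}
  {r s t u w : Labelling adj pos k}

theorem rk_eq_sum_label (t : Labelling adj pos k) : rk t = ∑ p ∈ pos, label t p := by
  rw [← Finset.sum_attach]
  exact Finset.sum_congr rfl fun x _ => (label_of_mem t x.2).symm

/-- `s` is obtained from `r` by increasing the label at `p` by one. -/
def CoversAt (p : N × ℕ) (r s : Labelling adj pos k) : Prop :=
  p ∈ pos ∧ label s = label r + Pi.single p 1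

namespace CoversAt

theorem mem (hrs : CoversAt p r s) : p ∈ pos := hrs.1

theorem label_eq (hrs : CoversAt p r s) (q : N × ℕ) :
    label s q = label r q + if q = p then 1 else 0 := by
  rw [hrs.2, Pi.add_apply, Pi.single_apply]

theorem label_self (hrs : CoversAt p r s) : label s p = label r p + 1 := by
  rw [hrs.label_eq, if_pos rfl]

theorem label_of_ne (hrs : CoversAt p r s) (hqp : q ≠ p) : label s q = label r q := by
  rw [hrs.label_eq, if_neg hqp, add_zero]

theorem right_unique (hrs : CoversAt p r s) (hrt : CoversAt p r t) : s = t :=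
  label_injective (hrs.2.trans hrt.2.symm)

theorem left_unique (hrt : CoversAt p r t) (hst : CoversAt p s t) : r = s :=
  label_injective (add_right_cancel (hrt.2.symm.trans hst.2))

theorem position_unique (hp : CoversAt p r s) (hq : CoversAt q r s) : p = q := by
  by_contra hpq
  have := hp.label_self.symm.trans (hq.label_of_ne hpq)
  lia

theorem rk_eq (hrs : CoversAt p r s) : rk s = rk r + 1 := by
  simp only [rk_eq_sum_label, hrs.label_eq, Finset.sum_add_distrib, Finset.sum_ite_eq', hrs.mem,
    if_true]

theorem label_eq_inf (hus : CoversAt p u s) (hur : CoversAt q u r) (hpq : p ≠ q) :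
    label u = label s ⊓ label r := by
  funext x
  have := hus.label_eq x
  have := hur.label_eq x
  rw [Pi.inf_apply]
  grind

theorem label_eq_sup (hsw : CoversAt q s w) (hrw : CoversAt p r w) (hpq : p ≠ q) :
    label w = label s ⊔ label r := by
  funext x
  have := hsw.label_eq x
  have := hrw.label_eq x
  rw [Pi.sup_apply]
  grind

theorem exists_sup (hus : CoversAt p u s) (hur : CoversAt q u r) (hpq : p ≠ q) :
    ∃ w, CoversAt q s w ∧ CoversAt p r w := by
  obtain ⟨w, hw⟩ := exists_label_eq (adj := adj) (pos := pos) (k := k) (g := label r ⊔ label s)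
    (fun x => sup_le (label_le r x) (label_le s x))
    (fun x hx => by simp [label_of_notMem _ hx])
    (fun x y hxy => sup_le_sup (label_le_of_step r hxy) (label_le_of_step s hxy))
  refine ⟨w, ⟨hur.mem, funext fun x => ?_⟩, ⟨hus.mem, funext fun x => ?_⟩⟩ <;>
    rw [hw, Pi.sup_apply, Pi.add_apply, Pi.single_apply, hus.label_eq, hur.label_eq] <;>
    split_ifs <;> grind

theorem exists_inf (hsw : CoversAt q s w) (hrw : CoversAt p r w) (hpq : p ≠ q) :
    ∃ u, CoversAt p u s ∧ CoversAt q u r := by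
  obtain ⟨u, hu⟩ := exists_label_eq (adj := adj) (pos := pos) (k := k) (g := label r ⊓ label s)
    (fun x => inf_le_of_left_le (label_le r x))
    (fun x hx => by simp [label_of_notMem _ hx])
    (fun x y hxy => inf_le_inf (label_le_of_step r hxy) (label_le_of_step s hxy))
  refine ⟨u, ⟨hrw.mem, funext fun x => ?_⟩, ⟨hsw.mem, funext fun x => ?_⟩⟩ <;>
    have := hsw.label_eq x <;> have := hrw.label_eq x <;>
    rw [hu, Pi.add_apply, Pi.inf_apply, Pi.single_apply] <;> grind

end CoversAt

theorem edge_iff_exists_coversAt {i : N} : edge i r s ↔ ∃ p ∈ colorClass pos i, CoversAt p r s := by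
  constructor
  · rintro ⟨⟨p, hp⟩, rfl, label_p, label_ne⟩
    refine ⟨p, Finset.mem_filter.2 ⟨hp, rfl⟩, hp, funext fun q => ?_⟩
    rw [Pi.add_apply, Pi.single_apply]
    by_cases hq : q ∈ pos
    · rw [label_of_mem s hq, label_of_mem r hq]
      split_ifs with hqp
      · subst hqp; exact label_p
      · exact label_ne ⟨q, hq⟩ fun h => hqp (congrArg Subtype.val h)
    · rw [label_of_notMem s hq, label_of_notMem r hq, if_neg (ne_of_mem_of_not_mem hp hq).symm,
        add_zero]
  · rintro ⟨p, hp, hrs⟩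
    refine ⟨⟨p, hrs.mem⟩, (Finset.mem_filter.1 hp).2, ?_, fun y hy => ?_⟩
    · rw [← label_of_mem s, ← label_of_mem r, hrs.label_self]
    · rw [← label_of_mem s, ← label_of_mem r, hrs.label_of_ne fun h => hy (Subtype.ext h)]

theorem CoversAt.edge (hrs : CoversAt p r s) : edge p.1 r s :=
  edge_iff_exists_coversAt.2 ⟨p, Finset.mem_filter.2 ⟨hrs.mem, rfl⟩, hrs⟩

omit [DecidableEq N] in
theorem color_unique {i j : N} (hi : edge i r s) (hj : edge j r s) : i = j := by
  classical
  obtain ⟨p, hp, hrs⟩ := edge_iff_exists_coversAt.1 hi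
  obtain ⟨q, hq, hrs'⟩ := edge_iff_exists_coversAt.1 hj
  rw [← (Finset.mem_filter.1 hp).2, hrs.position_unique hrs', (Finset.mem_filter.1 hq).2]

variable [DecidableRel adj]

theorem CoversAt.lowerBound_lt_label (hrt : CoversAt p r t) : lowerBound t p < label t p := by
  rw [hrt.label_self, Nat.lt_succ_iff, lowerBound_le_iff]
  intro q hq
  have hpq := (mem_upperCovers hrt.mem).1 hq
  exact (hrt.label_of_ne (ne_of_step hpq).symm).trans_le (label_le_of_step r hpq)

theorem exists_coversAt_left (hp : p ∈ pos) (hlt : lowerBound t p < label t p) :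
    ∃ r, CoversAt p r t := by
  obtain ⟨r, hr⟩ := exists_label_eq (adj := adj) (pos := pos) (k := k)
    (g := label t - Pi.single p 1) (fun x => (Nat.sub_le _ _).trans (label_le t x))
    (fun x hx => by simp [label_of_notMem t hx])
    (fun x y hxy => by
      simp only [Pi.sub_apply, Pi.single_apply]
      have hyx := label_le_of_step t hxy
      by_cases hxp : x = p
      · subst hxp
        have := label_le_lowerBound t ((mem_upperCovers hp).2 hxy)
        grind
      · grind)
  refine ⟨r, hp, funext fun x => ?_⟩
  simp only [hr, Pi.add_apply, Pi.sub_apply, Pi.single_apply]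
  grind

namespace IsMinuscule

variable {bot : N} {top : N × ℕ} (h : IsMinuscule adj pos bot top)
include h

theorem label_lt_upperBound (hts : CoversAt p t s) : label t p < upperBound t p := by
  rw [← Nat.succ_le_iff, Nat.succ_eq_add_one, ← hts.label_self, le_upperBound_iff]
  refine ⟨label_le s p, fun q hq => ?_⟩
  have hqp := (mem_lowerCovers h.symm hts.mem).1 hq
  exact (label_le_of_step s hqp).trans_eq (hts.label_of_ne (ne_of_step hqp))

theorem exists_coversAt_right (hp : p ∈ pos) (hlt : label t p < upperBound t p) :
    ∃ s, CoversAt p t s := by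
  obtain ⟨le_k, le_label⟩ := le_upperBound_iff.1 (Nat.succ_le_iff.2 hlt)
  obtain ⟨s, hs⟩ := exists_label_eq (adj := adj) (pos := pos) (k := k)
    (g := label t + Pi.single p 1)
    (fun x => by
      simp only [Pi.add_apply, Pi.single_apply]
      have := label_le t x
      grind)
    (fun x hx => by
      simp [label_of_notMem t hx, (ne_of_mem_of_not_mem hp hx).symm])
    (fun x y hxy => by
      simp only [Pi.add_apply, Pi.single_apply]
      have hyx := label_le_of_step t hxy
      by_cases hyp : y = p
      · subst hyp
        have := le_label x ((mem_lowerCovers h.symm hp).2 hxy)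
        grind
      · grind)
  exact ⟨s, hp, hs⟩

end IsMinuscule

end Covering

section Weight

variable {N : Type} [DecidableEq N] {adj : N → N → Prop} {pos : Finset (N × ℕ)} {k : ℕ} {i : N}
  {s t : Labelling adj pos k}

/-- The Cartan matrix of the simply laced Dynkin diagram with adjacency relation `adj`. -/
def cartanMatrix (adj : N → N → Prop) [DecidableRel adj] (i j : N) : ℤ :=
  if i = j then 2 else if adj i j then -1 else 0

/-- The greatest element of `L(k)`. -/
def topLabelling (adj : N → N → Prop) (pos : Finset (N × ℕ)) (k : ℕ) : Labelling adj pos k :=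
  ⟨fun _ => k, fun _ => le_rfl, fun _ _ _ => le_rfl, trivial⟩

theorem label_topLabelling {p : N × ℕ} (hp : p ∈ pos) : label (topLabelling adj pos k) p = k :=
  label_of_mem _ hp

theorem rk_eq_add_sum_colorClass (i : N) (t : Labelling adj pos k) :
    rk t = ∑ p ∈ colorClass pos i, label t p + ∑ p ∈ pos with p.1 ≠ i, label t p := by
  rw [rk_eq_sum_label, colorClass, Finset.sum_filter_add_sum_filter_not]

theorem label_eq_of_mem_comp (hst : s ∈ comp i t) {p : N × ℕ} (hp : p.1 ≠ i) :
    label s p = label t p := by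
  induction hst with
  | refl => rfl
  | tail _ hrs ih =>
    rcases hrs with hrs | hrs <;> obtain ⟨q, hq, hrs⟩ := edge_iff_exists_coversAt.1 hrs
    all_goals
      have hpq : p ≠ q := fun hpq => hp (hpq ▸ (Finset.mem_filter.1 hq).2)
    · rw [hrs.label_of_ne hpq, ih]
    · rw [← hrs.label_of_ne hpq, ih]

theorem rk_eq_of_mem_comp (hst : s ∈ comp i t) : rk s =
    ∑ p ∈ colorClass pos i, label s p + ∑ p ∈ pos with p.1 ≠ i, label t p := by
  rw [rk_eq_add_sum_colorClass i, Finset.sum_congr rfl fun p hp =>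
    label_eq_of_mem_comp hst (Finset.mem_filter.1 hp).2]

namespace IsMinuscule

variable [DecidableRel adj] {bot : N} {top : N × ℕ} (h : IsMinuscule adj pos bot top)
include h

theorem ne_of_mem_neighbors {y : N × ℕ} (hy : y ∈ neighbors adj pos i) : y.1 ≠ i :=
  fun hyi => h.irrefl i (hyi ▸ (Finset.mem_filter.1 hy).2)

theorem upperBound_eq_of_mem_comp (hst : s ∈ comp i t) {p : N × ℕ} (hp : p ∈ colorClass pos i) :
    upperBound s p = upperBound t p :=
  Finset.fold_congr fun _ hq => label_eq_of_mem_comp hst <|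
    h.ne_of_mem_neighbors ((Finset.mem_filter.1 hp).2 ▸ (Finset.mem_filter.1 hq).1)

theorem lowerBound_eq_of_mem_comp (hst : s ∈ comp i t) {p : N × ℕ} (hp : p ∈ colorClass pos i) :
    lowerBound s p = lowerBound t p :=
  Finset.sup_congr rfl fun _ hq => label_eq_of_mem_comp hst <|
    h.ne_of_mem_neighbors ((Finset.mem_filter.1 hp).2 ▸ (Finset.mem_filter.1 hq).1)

theorem sSup_rk_comp (i : N) (t : Labelling adj pos k) : sSup (rk '' comp i t) =
    ∑ p ∈ colorClass pos i, upperBound t p + ∑ p ∈ pos with p.1 ≠ i, label t p := by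
  have bdd : BddAbove (rk '' comp i t) := by
    refine ⟨∑ p ∈ colorClass pos i, upperBound t p + ∑ p ∈ pos with p.1 ≠ i, label t p, ?_⟩
    rintro _ ⟨s, hs, rfl⟩
    rw [rk_eq_of_mem_comp hs]
    gcongr with p hp
    exact (h.label_le_upperBound s (Finset.mem_filter.1 hp).1).trans_eq
      (h.upperBound_eq_of_mem_comp hs hp)
  obtain ⟨s, hs, rk_s⟩ := Nat.sSup_mem (s := rk '' comp i t)
    ⟨_, t, Relation.ReflTransGen.refl, rfl⟩ bdd
  have label_s : ∀ p ∈ colorClass pos i, label s p = upperBound t p := by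
    intro p hp
    have hp_pos := (Finset.mem_filter.1 hp).1
    rw [← h.upperBound_eq_of_mem_comp hs hp]
    refine (h.label_le_upperBound s hp_pos).antisymm (not_lt.1 fun hlt => ?_)
    obtain ⟨u, hsu⟩ := h.exists_coversAt_right hp_pos hlt
    have hu : u ∈ comp i t := hs.tail (.inl (edge_iff_exists_coversAt.2 ⟨p, hp, hsu⟩))
    have := le_csSup bdd ⟨u, hu, rfl⟩
    rw [hsu.rk_eq] at this
    lia
  rw [← rk_s, rk_eq_of_mem_comp hs, Finset.sum_congr rfl label_s]

theorem sInf_rk_comp (i : N) (t : Labelling adj pos k) : sInf (rk '' comp i t) =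
    ∑ p ∈ colorClass pos i, lowerBound t p + ∑ p ∈ pos with p.1 ≠ i, label t p := by
  obtain ⟨s, hs, rk_s⟩ := Nat.sInf_mem (s := rk '' comp i t)
    ⟨_, t, Relation.ReflTransGen.refl, rfl⟩
  have label_s : ∀ p ∈ colorClass pos i, label s p = lowerBound t p := by
    intro p hp
    have hp_pos := (Finset.mem_filter.1 hp).1
    rw [← h.lowerBound_eq_of_mem_comp hs hp]
    refine (not_lt.1 fun hlt => ?_).antisymm (lowerBound_le_label s hp_pos)
    obtain ⟨u, hus⟩ := exists_coversAt_left hp_pos hlt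
    have hu : u ∈ comp i t := hs.tail (.inr (edge_iff_exists_coversAt.2 ⟨p, hp, hus⟩))
    have := Nat.sInf_le (Set.mem_image_of_mem rk hu)
    rw [← rk_s, hus.rk_eq] at this
    lia
  rw [← rk_s, rk_eq_of_mem_comp hs, Finset.sum_congr rfl label_s]

theorem mwt_eq (i : N) (t : Labelling adj pos k) : mwt i t =
    ∑ p ∈ colorClass pos i, (2 * (label t p : ℤ) - upperBound t p - lowerBound t p) := by
  rw [mwt, h.sSup_rk_comp, h.sInf_rk_comp, rk_eq_add_sum_colorClass i t]
  simp only [Finset.sum_sub_distrib, ← Finset.mul_sum]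
  push_cast
  ring

theorem sum_upperBound_add_lowerBound (i : N) (t : Labelling adj pos k) :
    ∑ p ∈ colorClass pos i, (upperBound t p + lowerBound t p) =
      ∑ y ∈ neighbors adj pos i, label t y + if i = bot then k else 0 := by
  have := congrArg Multiplicative.toAdd
    (h.prod_upperBound_mul_lowerBound (fun v _ => Multiplicative.ofAdd v) t i)
  simp only [bottomFactor, topFactor] at this
  split_ifs at this ⊢ <;> simpa using this

theorem sum_cartanMatrix_mul (i : N) (g : N × ℕ → ℤ) : ∑ p ∈ pos, cartanMatrix adj p.1 i * g p =
    2 * ∑ p ∈ colorClass pos i, g p - ∑ y ∈ neighbors adj pos i, g y := by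
  rw [colorClass, neighbors, Finset.sum_filter, Finset.sum_filter, Finset.mul_sum,
    ← Finset.sum_sub_distrib]
  refine Finset.sum_congr rfl fun p _ => ?_
  have := h.irrefl i
  have adj_iff : adj p.1 i ↔ adj i p.1 := ⟨h.symm _ _, h.symm _ _⟩
  grind [cartanMatrix]

theorem mwt_eq_sum_cartanMatrix (i : N) (t : Labelling adj pos k) :
    mwt i t = ∑ p ∈ pos, cartanMatrix adj p.1 i * label t p - if i = bot then (k : ℤ) else 0 := by
  have bounds := congrArg (Nat.cast (R := ℤ)) (h.sum_upperBound_add_lowerBound i t)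
  push_cast [Finset.sum_add_distrib] at bounds
  rw [h.mwt_eq, h.sum_cartanMatrix_mul, Finset.sum_sub_distrib, Finset.sum_sub_distrib,
    ← Finset.mul_sum]
  linarith

theorem mwt_eq_add_of_coversAt {p : N × ℕ} (hst : CoversAt p s t) (i : N) :
    mwt i t = mwt i s + cartanMatrix adj p.1 i := by
  simp only [h.mwt_eq_sum_cartanMatrix, hst.label_eq, Nat.cast_add, mul_add,
    Finset.sum_add_distrib, Nat.cast_ite, Nat.cast_one, Nat.cast_zero, mul_ite, mul_one, mul_zero,
    Finset.sum_ite_eq', hst.mem, if_true]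
  ring

theorem mwt_topLabelling (i : N) :
    mwt i (topLabelling adj pos k) = if i = top.1 then (k : ℤ) else 0 := by
  have counting : 2 * ((colorClass pos i).card : ℤ) = (neighbors adj pos i).card +
      (if i = bot then 1 else 0) + if i = top.1 then 1 else 0 := by
    have := congrArg Multiplicative.toAdd (h.prod_upperBound_mul_lowerBound
      (fun _ _ => Multiplicative.ofAdd (1 : ℤ)) (topLabelling adj pos k) i)
    simp only [bottomFactor, topFactor] at this
    rw [mul_comm]
    split_ifs at this ⊢ <;> simpa using this
  rw [h.mwt_eq_sum_cartanMatrix, Finset.sum_congr rfl fun p hp => by rw [label_topLabelling hp],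
    h.sum_cartanMatrix_mul, Finset.sum_const, Finset.sum_const, nsmul_eq_mul, nsmul_eq_mul]
  split_ifs at counting ⊢ <;> linear_combination (k : ℤ) * counting

end IsMinuscule

end Weight

section NodeCoefficients

variable {F ι : Type*} [Field F] [DecidableEq ι] {s : Finset ι} {ξ a b : ι → F} {p : ι}

/-- The coefficient attached to the node `p` at the point `z`: for interlacing data, its values at
`z = ξ p` and `z = ξ p - 1` are up to sign the residues at these points of
`∏ (z - a q) (z - b q) / ∏ (z - ξ q) (z - ξ q + 1)`. -/
def nodeCoeff (s : Finset ι) (ξ a b : ι → F) (p : ι) (z : F) : F :=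
  -(∏ q ∈ s, (z - a q) * (z - b q)) / ∏ q ∈ s.erase p, (z - ξ q) * (z - ξ q + 1)

theorem nodeCoeff_eq_zero_of_eq_left (hp : p ∈ s) {z : F} (hz : z = a p) :
    nodeCoeff s ξ a b p z = 0 := by
  rw [nodeCoeff, Finset.prod_eq_zero hp (by simp [hz]), neg_zero, zero_div]

theorem nodeCoeff_eq_zero_of_eq_right (hp : p ∈ s) {z : F} (hz : z = b p) :
    nodeCoeff s ξ a b p z = 0 := by
  rw [nodeCoeff, Finset.prod_eq_zero hp (by simp [hz]), neg_zero, zero_div]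

variable (s ξ a b) in
theorem prod_div_prod_eq_neg_nodeCoeff (hp : p ∈ s) :
    (∏ q ∈ s, (ξ p - a q) * (ξ p - b q)) /
      ((∏ q ∈ s.erase p, (ξ p - ξ q)) * ∏ q ∈ s, (ξ p - (ξ q - 1))) =
    -nodeCoeff s ξ a b p (ξ p) := by
  rw [nodeCoeff, ← Finset.mul_prod_erase s (fun q => ξ p - (ξ q - 1)) hp,
    mul_left_comm, ← Finset.prod_mul_distrib, sub_sub_cancel, one_mul, neg_div, neg_neg]
  simp only [sub_sub_eq_add_sub, sub_add_eq_add_sub]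

variable (s ξ a b) in
theorem prod_div_prod_eq_nodeCoeff_sub_one (hp : p ∈ s) :
    (∏ q ∈ s, (ξ p - 1 - a q) * (ξ p - 1 - b q)) /
      ((∏ q ∈ s, (ξ p - 1 - ξ q)) * ∏ q ∈ s.erase p, (ξ p - 1 - (ξ q - 1))) =
    nodeCoeff s ξ a b p (ξ p - 1) := by
  rw [nodeCoeff, ← Finset.mul_prod_erase s (fun q => ξ p - 1 - ξ q) hp, mul_assoc,
    ← Finset.prod_mul_distrib, sub_sub_cancel_left, neg_one_mul, div_neg, neg_div]
  simp only [sub_sub_eq_add_sub, sub_add_eq_add_sub]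

variable [LinearOrder F] [IsStrictOrderedRing F]

/-- The points `ξ p` lie in the intervals `[b p + 1, a p]`, and the intervals `[b p, a p]` do not
overlap. -/
structure Interlacing (s : Finset ι) (ξ a b : ι → F) : Prop where
  lower : ∀ p ∈ s, b p + 1 ≤ ξ p
  upper : ∀ p ∈ s, ξ p ≤ a p
  separated : ∀ p ∈ s, ∀ q ∈ s, p ≠ q → a q ≤ b p ∨ a p ≤ b q

namespace Interlacing

theorem nodeCoeff_pos (H : Interlacing s ξ a b) (hp : p ∈ s) (hlt : ξ p < a p) :
    0 < nodeCoeff s ξ a b p (ξ p) := by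
  have own_factor : 0 < -((ξ p - a p) * (ξ p - b p)) := by nlinarith [H.lower p hp]
  have other_factor : ∀ q ∈ s.erase p,
      0 < (ξ p - a q) * (ξ p - b q) / ((ξ p - ξ q) * (ξ p - ξ q + 1)) := by
    intro q hq
    obtain ⟨hqp, hqs⟩ := Finset.mem_erase.1 hq
    have := H.lower p hp
    have := H.lower q hqs
    have := H.upper q hqs
    rcases H.separated p hp q hqs hqp.symm with h_above | h_below
    · exact div_pos (mul_pos (by linarith) (by linarith)) (mul_pos (by linarith) (by linarith))
    · exact div_pos (mul_pos_of_neg_of_neg (by linarith) (by linarith))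
        (mul_pos_of_neg_of_neg (by linarith) (by linarith))
  rw [nodeCoeff, ← Finset.mul_prod_erase s _ hp, ← neg_mul, mul_div_assoc,
    ← Finset.prod_div_distrib]
  exact mul_pos own_factor (Finset.prod_pos other_factor)

theorem sum_residues (H : Interlacing s ξ a b) :
    ∑ p ∈ s, (∏ q ∈ s, (ξ p - a q) * (ξ p - b q)) /
        ((∏ q ∈ s.erase p, (ξ p - ξ q)) * ∏ q ∈ s, (ξ p - (ξ q - 1))) +
      ∑ p ∈ s, (∏ q ∈ s, (ξ p - 1 - a q) * (ξ p - 1 - b q)) /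
        ((∏ q ∈ s, (ξ p - 1 - ξ q)) * ∏ q ∈ s.erase p, (ξ p - 1 - (ξ q - 1))) =
    ∑ p ∈ s, (ξ p - a p) + ∑ p ∈ s, (ξ p - 1 - b p) := by
  have erase_inl (p : ι) : (s.disjSum s).erase (.inl p) = (s.erase p).disjSum s := by
    ext (q | q) <;> simp
  have erase_inr (p : ι) : (s.disjSum s).erase (.inr p) = s.disjSum (s.erase p) := by
    ext (q | q) <;> simp
  have simple_or_cancelled : ∀ x ∈ s.disjSum s, Sum.elim ξ (ξ · - 1) x ≠ Sum.elim a b x →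
      ∀ y ∈ s.disjSum s, y ≠ x → Sum.elim ξ (ξ · - 1) x ≠ Sum.elim ξ (ξ · - 1) y := by
    have separated (p q : ι) (hp : p ∈ s) (hq : q ∈ s) (hpq : p ≠ q) := H.separated p hp q hq hpq
    have bounds (p : ι) (hp : p ∈ s) := And.intro (H.lower p hp) (H.upper p hp)
    rintro (p | p) hp hne (q | q) hq hqp heq <;>
      simp only [Finset.inl_mem_disjSum, Finset.inr_mem_disjSum, Sum.elim_inl, Sum.elim_inr] at *
    all_goals by_cases hpq : p = q
    all_goals grind
  have residues := sum_prod_sub_div_prod_sub _ _ _ simple_or_cancelled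
  rw [Finset.sum_disjSum, Finset.sum_disjSum] at residues
  simpa only [Finset.prod_disjSum, erase_inl, erase_inr, Sum.elim_inl, Sum.elim_inr,
    ← Finset.prod_mul_distrib] using residues

theorem sum_nodeCoeff_sub_nodeCoeff (H : Interlacing s ξ a b) :
    ∑ p ∈ s, (nodeCoeff s ξ a b p (ξ p - 1) - nodeCoeff s ξ a b p (ξ p)) =
      ∑ p ∈ s, (2 * ξ p - 1 - a p - b p) := by
  have residues := H.sum_residues
  rw [Finset.sum_congr rfl fun p hp => prod_div_prod_eq_neg_nodeCoeff s ξ a b hp,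
    Finset.sum_congr rfl fun p hp => prod_div_prod_eq_nodeCoeff_sub_one s ξ a b hp,
    ← Finset.sum_add_distrib, ← Finset.sum_add_distrib] at residues
  rw [Finset.sum_congr rfl fun p _ => sub_eq_neg_add _ _, residues]
  exact Finset.sum_congr rfl fun p _ => by ring

end Interlacing

end NodeCoefficients

section EdgeCoefficients

variable {N : Type} [DecidableEq N] {adj : N → N → Prop} {pos : Finset (N × ℕ)}
  {k : ℕ} {bot : N} {top : N × ℕ} {p q : N × ℕ} {r s t u w : Labelling adj pos k}

/-- The shift by half the rank of a value `v` at a position of rank `r`; it turns the labels of a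
color class into interlacing data. -/
def shift (v r : ℕ) : ℚ := v - r / 2

/-- The label of `t` at `p`, shifted by half the rank of `p`. -/
def shiftedLabel (t : Labelling adj pos k) (p : N × ℕ) : ℚ := shift (label t p) p.2

theorem CoversAt.shiftedLabel_self (hrs : CoversAt p r s) :
    shiftedLabel s p = shiftedLabel r p + 1 := by
  simp only [shiftedLabel, shift, hrs.label_self]
  push_cast
  ring

theorem CoversAt.shiftedLabel_of_ne (hrs : CoversAt p r s) (hqp : q ≠ p) :
    shiftedLabel s q = shiftedLabel r q := by
  rw [shiftedLabel, shiftedLabel, hrs.label_of_ne hqp]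

variable [DecidableRel adj]

/-- The factors contributed by the least and the greatest position to the edge coefficient at the
color `i`. -/
def boundaryFactor (k : ℕ) (bot : N) (top : N × ℕ) (i : N) (z : ℚ) : ℚ :=
  bottomFactor (z - shift · ·) k bot i * topFactor (z - shift · ·) top i

/-- The coefficient of the edge at `p` as a function of the shifted label at `p`, all other labels
being those of `t`. -/
def edgeCoeff (bot : N) (top : N × ℕ) (t : Labelling adj pos k) (p : N × ℕ) (z : ℚ) : ℚ :=
  -(boundaryFactor k bot top p.1 z *
      ∏ y ∈ neighbors adj pos p.1, (z - shiftedLabel t y + 1 / 2)) /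
    ∏ q ∈ (colorClass pos p.1).erase p, (z - shiftedLabel t q) * (z - shiftedLabel t q + 1)

/-- The edge coefficients of `L(k)`; the sum has at most one term when `s` covers `r`. -/
def edgeWeight (bot : N) (top : N × ℕ) (r s : Labelling adj pos k) : ℚ :=
  ∑ p ∈ pos with label r p < label s p, edgeCoeff bot top r p (shiftedLabel r p)

theorem CoversAt.edgeWeight_eq (hrs : CoversAt p r s) :
    edgeWeight bot top r s = edgeCoeff bot top r p (shiftedLabel r p) := by
  have position_eq : {q ∈ pos | label r q < label s q} = {p} := by
    ext q
    have := hrs.mem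
    have := hrs.label_eq q
    grind
  rw [edgeWeight, position_eq, Finset.sum_singleton]

/-- The factor that the position `q` contributes to the coefficient of an edge at `p`, as a function
of the difference of the shifted labels. -/
def interaction (adj : N → N → Prop) [DecidableRel adj] (p q : N × ℕ) (d : ℚ) : ℚ :=
  (if adj p.1 q.1 then d + 1 / 2 else 1) * if q.1 = p.1 ∧ q ≠ p then (d * (d + 1))⁻¹ else 1

theorem edgeCoeff_eq_prod_interaction (t : Labelling adj pos k) (p : N × ℕ) (z : ℚ) :
    edgeCoeff bot top t p z = -boundaryFactor k bot top p.1 z *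
      ∏ q ∈ pos, interaction adj p q (z - shiftedLabel t q) := by
  have erase_eq : (colorClass pos p.1).erase p = {q ∈ pos | q.1 = p.1 ∧ q ≠ p} := by
    ext q
    simp only [colorClass, Finset.mem_erase, Finset.mem_filter]
    tauto
  simp only [interaction, Finset.prod_mul_distrib, ← Finset.prod_filter, Finset.prod_inv_distrib,
    edgeCoeff, erase_eq, neighbors, neg_mul, div_eq_mul_inv, mul_assoc]

theorem interaction_mul_interaction (symm : ∀ i j, adj i j → adj j i) (p q : N × ℕ) (d : ℚ) :
    interaction adj p q (d - 1) * interaction adj q p (-d - 1) =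
      interaction adj p q d * interaction adj q p (-d) := by
  have adj_comm : adj q.1 p.1 ↔ adj p.1 q.1 := ⟨symm _ _, symm _ _⟩
  simp only [interaction, adj_comm, eq_comm (a := p.1), ne_comm (a := p)]
  split_ifs <;> ring_nf

theorem CoversAt.exists_edgeWeight_eq_mul_interaction (hus : CoversAt p u s) (hur : CoversAt q u r)
    (hrw : CoversAt p r w) (hpq : p ≠ q) :
    ∃ c : ℚ,
      edgeWeight bot top u s = c * interaction adj p q (shiftedLabel u p - shiftedLabel u q) ∧
      edgeWeight bot top r w =
        c * interaction adj p q (shiftedLabel u p - shiftedLabel u q - 1) := by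
  refine ⟨-boundaryFactor k bot top p.1 (shiftedLabel u p) *
    ∏ x ∈ pos.erase q, interaction adj p x (shiftedLabel u p - shiftedLabel u x), ?_, ?_⟩
  · rw [hus.edgeWeight_eq, edgeCoeff_eq_prod_interaction, ← Finset.prod_erase_mul _ _ hur.mem,
      mul_assoc]
  · rw [hrw.edgeWeight_eq, edgeCoeff_eq_prod_interaction, ← Finset.prod_erase_mul _ _ hur.mem,
      hur.shiftedLabel_of_ne hpq, hur.shiftedLabel_self, sub_add_eq_sub_sub, mul_assoc]
    congr 2
    refine Finset.prod_congr rfl fun x hx => ?_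
    rw [hur.shiftedLabel_of_ne (Finset.ne_of_mem_erase hx)]

theorem CoversAt.edgeWeight_mul_edgeWeight (symm : ∀ i j, adj i j → adj j i)
    (hus : CoversAt p u s) (hur : CoversAt q u r) (hrw : CoversAt p r w) (hsw : CoversAt q s w)
    (hpq : p ≠ q) : edgeWeight bot top u s * edgeWeight bot top u r =
      edgeWeight bot top s w * edgeWeight bot top r w := by
  obtain ⟨c, hc_us, hc_rw⟩ := exists_edgeWeight_eq_mul_interaction hus hur hrw hpq
  obtain ⟨c', hc_ur, hc_sw⟩ := exists_edgeWeight_eq_mul_interaction hur hus hsw hpq.symm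
  have exchange := interaction_mul_interaction symm p q (shiftedLabel u p - shiftedLabel u q)
  rw [neg_sub] at exchange
  rw [hc_us, hc_ur, hc_rw, hc_sw]
  linear_combination -c * c' * exchange

namespace IsMinuscule

variable (h : IsMinuscule adj pos bot top)
include h

theorem interlacing (t : Labelling adj pos k) (i : N) :
    Interlacing (colorClass pos i) (shiftedLabel t) (fun p => shift (upperBound t p) p.2)
      (fun p => shift (lowerBound t p) (p.2 + 2)) where
  lower p hp := by
    have : (lowerBound t p : ℚ) ≤ label t p := mod_cast
      lowerBound_le_label t (Finset.mem_filter.1 hp).1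
    simp only [shiftedLabel, shift]
    push_cast
    linarith
  upper p hp := by
    have : (label t p : ℚ) ≤ upperBound t p := mod_cast
      h.label_le_upperBound t (Finset.mem_filter.1 hp).1
    simpa only [shiftedLabel, shift, sub_le_sub_iff_right]
  separated p hp q hq hpq := by
    have separated_of_lt {p q : N × ℕ} (hp : p ∈ colorClass pos i) (hq : q ∈ colorClass pos i)
        (hlt : p.2 < q.2) : shift (upperBound t q) q.2 ≤ shift (lowerBound t p) (p.2 + 2) := by
      obtain ⟨hp_pos, rfl⟩ := Finset.mem_filter.1 hp
      obtain ⟨rank_le, bound_le⟩ :=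
        h.rank_add_two_le_and_upperBound_le_lowerBound t hp_pos hq hlt
      rw [shift, shift]
      gcongr
    have rank_ne : p.2 ≠ q.2 := fun rank_eq => hpq <|
      Prod.ext ((Finset.mem_filter.1 hp).2.trans (Finset.mem_filter.1 hq).2.symm) rank_eq
    exact rank_ne.lt_or_gt.imp (separated_of_lt hp hq) (separated_of_lt hq hp)

theorem edgeCoeff_eq_nodeCoeff (t : Labelling adj pos k) (p : N × ℕ) (z : ℚ) :
    edgeCoeff bot top t p z = nodeCoeff (colorClass pos p.1) (shiftedLabel t)
      (fun q => shift (upperBound t q) q.2) (fun q => shift (lowerBound t q) (q.2 + 2)) p z := by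
  have sub_shift (y : N × ℕ) :
      z - shift (label t y) (y.2 + 1) = z - shiftedLabel t y + 1 / 2 := by
    simp only [shiftedLabel, shift]
    push_cast
    ring
  rw [edgeCoeff, nodeCoeff, h.prod_upperBound_mul_lowerBound (z - shift · ·) t, boundaryFactor,
    Finset.prod_congr rfl fun y _ => sub_shift y]
  congr 2
  ring

theorem edgeWeight_pos (hrs : CoversAt p r s) : 0 < edgeWeight bot top r s := by
  rw [hrs.edgeWeight_eq, h.edgeCoeff_eq_nodeCoeff]
  refine (h.interlacing r p.1).nodeCoeff_pos (Finset.mem_filter.2 ⟨hrs.mem, rfl⟩) ?_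
  have : (label r p : ℚ) < upperBound r p := mod_cast h.label_lt_upperBound hrs
  simpa only [shiftedLabel, shift, sub_lt_sub_iff_right]

theorem edgeWeight_eq_edgeCoeff_right (hrs : CoversAt p r s) :
    edgeWeight bot top r s = edgeCoeff bot top s p (shiftedLabel s p - 1) := by
  rw [hrs.edgeWeight_eq, hrs.shiftedLabel_self, add_sub_cancel_right, edgeCoeff, edgeCoeff]
  have neighbor_eq (y) (hy : y ∈ neighbors adj pos p.1) : shiftedLabel s y = shiftedLabel r y :=
    hrs.shiftedLabel_of_ne fun hyp => h.ne_of_mem_neighbors hy (congrArg Prod.fst hyp)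
  have class_eq (q) (hq : q ∈ (colorClass pos p.1).erase p) : shiftedLabel s q = shiftedLabel r q :=
    hrs.shiftedLabel_of_ne (Finset.ne_of_mem_erase hq)
  rw [Finset.prod_congr rfl fun y hy => by rw [← neighbor_eq y hy],
    Finset.prod_congr (s₁ := (colorClass pos p.1).erase p) rfl fun q hq => by
      rw [← class_eq q hq]]

theorem mwt_eq_sum_edgeCoeff (i : N) (t : Labelling adj pos k) : (mwt i t : ℚ) =
    ∑ p ∈ colorClass pos i, (edgeCoeff bot top t p (shiftedLabel t p - 1) -
      edgeCoeff bot top t p (shiftedLabel t p)) := by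
  calc (mwt i t : ℚ)
    _ = ∑ p ∈ colorClass pos i, (2 * shiftedLabel t p - 1 - shift (upperBound t p) p.2 -
          shift (lowerBound t p) (p.2 + 2)) := by
      rw [h.mwt_eq, Int.cast_sum]
      refine Finset.sum_congr rfl fun p _ => ?_
      simp only [shiftedLabel, shift]
      push_cast
      ring
    _ = _ := by
      rw [← (h.interlacing t i).sum_nodeCoeff_sub_nodeCoeff]
      refine Finset.sum_congr rfl fun p hp => ?_
      rw [h.edgeCoeff_eq_nodeCoeff, h.edgeCoeff_eq_nodeCoeff, (Finset.mem_filter.1 hp).2]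

theorem sum_edgeWeight_right (i : N) (t : Labelling adj pos k) :
    ∑ s with edge i t s, edgeWeight bot top t s =
      ∑ p ∈ colorClass pos i, edgeCoeff bot top t p (shiftedLabel t p) := by
  have : Nonempty (N × ℕ) := ⟨(i, 0)⟩
  have position (s : Labelling adj pos k) (hs : edge i t s) := edge_iff_exists_coversAt.1 hs
  choose! position position_mem coversAt using position
  refine Finset.sum_of_injOn position ?_ ?_ ?_ ?_
  · intro s hs s' hs' heq
    have hs := coversAt s (Finset.mem_filter.1 hs).2
    have hs' := coversAt s' (Finset.mem_filter.1 hs').2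
    exact hs.right_unique (heq ▸ hs')
  · exact fun s hs => position_mem s (Finset.mem_filter.1 hs).2
  · intro p hp not_image
    obtain ⟨hp_pos, hp_color⟩ := Finset.mem_filter.1 hp
    rw [h.edgeCoeff_eq_nodeCoeff, hp_color]
    refine nodeCoeff_eq_zero_of_eq_left hp ?_
    have label_eq : label t p = upperBound t p := by
      refine (h.label_le_upperBound t hp_pos).antisymm (not_lt.1 fun hlt => ?_)
      obtain ⟨s, hts⟩ := h.exists_coversAt_right hp_pos hlt
      have hs := edge_iff_exists_coversAt.2 ⟨p, hp, hts⟩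
      exact not_image ⟨s, by simpa using hs, (coversAt s hs).position_unique hts⟩
    rw [shiftedLabel, label_eq]
  · exact fun s hs => (coversAt s (Finset.mem_filter.1 hs).2).edgeWeight_eq

theorem sum_edgeWeight_left (i : N) (t : Labelling adj pos k) :
    ∑ r with edge i r t, edgeWeight bot top r t =
      ∑ p ∈ colorClass pos i, edgeCoeff bot top t p (shiftedLabel t p - 1) := by
  have : Nonempty (N × ℕ) := ⟨(i, 0)⟩
  have position (r : Labelling adj pos k) (hr : edge i r t) := edge_iff_exists_coversAt.1 hr
  choose! position position_mem coversAt using position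
  refine Finset.sum_of_injOn position ?_ ?_ ?_ ?_
  · intro r hr r' hr' heq
    have hr := coversAt r (Finset.mem_filter.1 hr).2
    have hr' := coversAt r' (Finset.mem_filter.1 hr').2
    exact hr.left_unique (heq ▸ hr')
  · exact fun r hr => position_mem r (Finset.mem_filter.1 hr).2
  · intro p hp not_image
    obtain ⟨hp_pos, hp_color⟩ := Finset.mem_filter.1 hp
    rw [h.edgeCoeff_eq_nodeCoeff, hp_color]
    refine nodeCoeff_eq_zero_of_eq_right hp ?_
    have label_eq : label t p = lowerBound t p := by
      refine (not_lt.1 fun hlt => ?_).antisymm (lowerBound_le_label t hp_pos)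
      obtain ⟨r, hrt⟩ := exists_coversAt_left hp_pos hlt
      have hr := edge_iff_exists_coversAt.2 ⟨p, hp, hrt⟩
      exact not_image ⟨r, by simpa using hr, (coversAt r hr).position_unique hrt⟩
    rw [shiftedLabel, label_eq, shift, shift]
    push_cast
    ring
  · exact fun r hr => h.edgeWeight_eq_edgeCoeff_right (coversAt r (Finset.mem_filter.1 hr).2)

theorem sum_edgeWeight_sub_sum_edgeWeight (i : N) (t : Labelling adj pos k) :
    ∑ r with edge i r t, edgeWeight bot top r t - ∑ s with edge i t s, edgeWeight bot top t s =
      mwt i t := by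
  rw [h.sum_edgeWeight_left, h.sum_edgeWeight_right, h.mwt_eq_sum_edgeCoeff,
    Finset.sum_sub_distrib]

end IsMinuscule

end EdgeCoefficients

section Matrices

open scoped Matrix

theorem lie_diagonal_apply {n R : Type*} [Fintype n] [DecidableEq n] [CommRing R] (d : n → R)
    (M : Matrix n n R) (i j : n) : ⁅Matrix.diagonal d, M⁆ i j = (d i - d j) * M i j := by
  rw [Ring.lie_def, Matrix.sub_apply, Matrix.diagonal_mul, Matrix.mul_diagonal]
  ring

variable {N : Type} [DecidableEq N] {adj : N → N → Prop} {pos : Finset (N × ℕ)} {k : ℕ} {i j : N}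
  {p q : N × ℕ} {r s t u w : Labelling adj pos k}
  {P : Labelling adj pos k → Labelling adj pos k → ℚ}

/-- The matrix of the raising operator `opX P i`; its transpose is that of `opY P i`. -/
def raiseMatrix (P : Labelling adj pos k → Labelling adj pos k → ℚ) (i : N) :
    Matrix (Labelling adj pos k) (Labelling adj pos k) ℂ :=
  Matrix.of fun s r => if edge i r s then (↑√(P r s) : ℂ) else 0

/-- The matrix of the diagonal operator `opH i`. -/
def weightMatrix (adj : N → N → Prop) (pos : Finset (N × ℕ)) (k : ℕ) (i : N) :
    Matrix (Labelling adj pos k) (Labelling adj pos k) ℂ :=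
  Matrix.diagonal fun t => mwt i t

theorem raiseMatrix_of_edge (hrs : edge i r s) : raiseMatrix P i s r = √(P r s) :=
  if_pos hrs

theorem edge_of_raiseMatrix_ne_zero (hrs : raiseMatrix P i s r ≠ 0) : edge i r s := by
  contrapose! hrs
  exact if_neg hrs

theorem raiseMatrix_mul_self (hP : edge i r s → 0 ≤ P r s) :
    raiseMatrix P i s r * raiseMatrix P i s r = if edge i r s then (P r s : ℂ) else 0 := by
  split_ifs with hrs
  · rw [raiseMatrix_of_edge hrs, ← Complex.ofReal_mul,
      Real.mul_self_sqrt (mod_cast hP hrs), Complex.ofReal_ratCast]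
  · rw [raiseMatrix, Matrix.of_apply, if_neg hrs, mul_zero]

theorem raiseMatrix_mul_transpose_apply_of_coversAt (hp : p ∈ colorClass pos i)
    (hq : q ∈ colorClass pos j) (hus : CoversAt p u s) (hur : CoversAt q u r) (hsr : s ≠ r) :
    (raiseMatrix P i * (raiseMatrix P j)ᵀ) s r = √(P u s) * √(P u r) := by
  rw [Matrix.mul_apply, Finset.sum_eq_single u, Matrix.transpose_apply,
    raiseMatrix_of_edge (edge_iff_exists_coversAt.2 ⟨p, hp, hus⟩),
    raiseMatrix_of_edge (edge_iff_exists_coversAt.2 ⟨q, hq, hur⟩)]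
  · intro u' _ hne
    by_contra hprod
    obtain ⟨p', -, hus'⟩ := edge_iff_exists_coversAt.1
      (edge_of_raiseMatrix_ne_zero (left_ne_zero_of_mul hprod))
    obtain ⟨q', -, hur'⟩ := edge_iff_exists_coversAt.1
      (edge_of_raiseMatrix_ne_zero (right_ne_zero_of_mul hprod))
    refine hne (label_injective ?_)
    rw [hus.label_eq_inf hur fun hpq => hsr (hus.right_unique (hpq ▸ hur)),
      hus'.label_eq_inf hur' fun hpq => hsr (hus'.right_unique (hpq ▸ hur'))]
  · exact fun hu => absurd (Finset.mem_univ u) hu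

theorem transpose_mul_raiseMatrix_apply_of_coversAt (hp : p ∈ colorClass pos i)
    (hq : q ∈ colorClass pos j) (hsw : CoversAt q s w) (hrw : CoversAt p r w) (hsr : s ≠ r) :
    ((raiseMatrix P j)ᵀ * raiseMatrix P i) s r = √(P s w) * √(P r w) := by
  rw [Matrix.mul_apply, Finset.sum_eq_single w, Matrix.transpose_apply,
    raiseMatrix_of_edge (edge_iff_exists_coversAt.2 ⟨p, hp, hrw⟩),
    raiseMatrix_of_edge (edge_iff_exists_coversAt.2 ⟨q, hq, hsw⟩)]
  · intro w' _ hne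
    by_contra hprod
    obtain ⟨q', -, hsw'⟩ := edge_iff_exists_coversAt.1
      (edge_of_raiseMatrix_ne_zero (left_ne_zero_of_mul hprod))
    obtain ⟨p', -, hrw'⟩ := edge_iff_exists_coversAt.1
      (edge_of_raiseMatrix_ne_zero (right_ne_zero_of_mul hprod))
    refine hne (label_injective ?_)
    rw [hsw.label_eq_sup hrw fun hpq => hsr (hsw.left_unique (hpq ▸ hrw)),
      hsw'.label_eq_sup hrw' fun hpq => hsr (hsw'.left_unique (hpq ▸ hrw'))]
  · exact fun hw => absurd (Finset.mem_univ w) hw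

theorem exists_coversAt_of_mul_transpose_ne_zero
    (hsr : (raiseMatrix P i * (raiseMatrix P j)ᵀ) s r ≠ 0) :
    ∃ p ∈ colorClass pos i, ∃ q ∈ colorClass pos j, ∃ u, CoversAt p u s ∧ CoversAt q u r := by
  obtain ⟨u, -, hu⟩ := Finset.exists_ne_zero_of_sum_ne_zero hsr
  obtain ⟨p, hp, hus⟩ := edge_iff_exists_coversAt.1
    (edge_of_raiseMatrix_ne_zero (left_ne_zero_of_mul hu))
  obtain ⟨q, hq, hur⟩ := edge_iff_exists_coversAt.1
    (edge_of_raiseMatrix_ne_zero (right_ne_zero_of_mul hu))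
  exact ⟨p, hp, q, hq, u, hus, hur⟩

theorem exists_coversAt_of_transpose_mul_ne_zero
    (hsr : ((raiseMatrix P j)ᵀ * raiseMatrix P i) s r ≠ 0) :
    ∃ p ∈ colorClass pos i, ∃ q ∈ colorClass pos j, ∃ w, CoversAt q s w ∧ CoversAt p r w := by
  obtain ⟨w, -, hw⟩ := Finset.exists_ne_zero_of_sum_ne_zero hsr
  obtain ⟨q, hq, hsw⟩ := edge_iff_exists_coversAt.1
    (edge_of_raiseMatrix_ne_zero (left_ne_zero_of_mul hw))
  obtain ⟨p, hp, hrw⟩ := edge_iff_exists_coversAt.1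
    (edge_of_raiseMatrix_ne_zero (right_ne_zero_of_mul hw))
  exact ⟨p, hp, q, hq, w, hsw, hrw⟩

theorem lie_raiseMatrix_transpose_apply_self_of_ne (hij : i ≠ j) (t : Labelling adj pos k) :
    ⁅raiseMatrix P i, (raiseMatrix P j)ᵀ⁆ t t = 0 := by
  rw [Ring.lie_def, Matrix.sub_apply, Matrix.mul_apply, Matrix.mul_apply]
  refine sub_eq_zero_of_eq ((Finset.sum_eq_zero fun r _ => ?_).trans
    (Finset.sum_eq_zero fun s _ => ?_).symm) <;>
    by_contra hprod
  · exact hij (color_unique (edge_of_raiseMatrix_ne_zero (left_ne_zero_of_mul hprod))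
      (edge_of_raiseMatrix_ne_zero (right_ne_zero_of_mul hprod)))
  · exact hij (color_unique (edge_of_raiseMatrix_ne_zero (right_ne_zero_of_mul hprod))
      (edge_of_raiseMatrix_ne_zero (left_ne_zero_of_mul hprod)))

/-- Edge coefficients satisfying the diamond and crossing relations, that is, the relations which
make `[x_i, y_j]` vanish off the diagonal and equal `h_i` on it. -/
structure EdgeRelations (P : Labelling adj pos k → Labelling adj pos k → ℚ) : Prop where
  nonneg : ∀ {i : N} {r s}, edge i r s → 0 ≤ P r s
  diamond : ∀ {p q : N × ℕ} {r s u w}, CoversAt p u s → CoversAt q u r → CoversAt q s w →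
    CoversAt p r w → p ≠ q → P u s * P u r = P s w * P r w
  crossing : ∀ i t, ∑ r with edge i r t, P r t - ∑ s with edge i t s, P t s = mwt i t

namespace EdgeRelations

variable (hP : EdgeRelations P)
include hP

theorem sqrt_mul_sqrt (hus : CoversAt p u s) (hur : CoversAt q u r) (hsw : CoversAt q s w)
    (hrw : CoversAt p r w) (hpq : p ≠ q) : √(P u s) * √(P u r) = √(P s w) * √(P r w) := by
  rw [← Real.sqrt_mul (mod_cast hP.nonneg hus.edge), ← Real.sqrt_mul (mod_cast hP.nonneg hsw.edge)]
  exact_mod_cast congrArg (fun x : ℚ => √x) (hP.diamond hus hur hsw hrw hpq)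

theorem lie_raiseMatrix_transpose_apply_of_ne (hsr : s ≠ r) :
    ⁅raiseMatrix P i, (raiseMatrix P j)ᵀ⁆ s r = 0 := by
  rw [Ring.lie_def, Matrix.sub_apply, sub_eq_zero]
  by_cases diamond : ∃ p ∈ colorClass pos i, ∃ q ∈ colorClass pos j, ∃ u w,
    CoversAt p u s ∧ CoversAt q u r ∧ CoversAt q s w ∧ CoversAt p r w
  · obtain ⟨p, hp, q, hq, u, w, hus, hur, hsw, hrw⟩ := diamond
    have hpq : p ≠ q := fun hpq => hsr (hus.right_unique (hpq ▸ hur))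
    rw [raiseMatrix_mul_transpose_apply_of_coversAt hp hq hus hur hsr,
      transpose_mul_raiseMatrix_apply_of_coversAt hp hq hsw hrw hsr]
    exact_mod_cast hP.sqrt_mul_sqrt hus hur hsw hrw hpq
  · trans 0
    · by_contra hne
      obtain ⟨p, hp, q, hq, u, hus, hur⟩ := exists_coversAt_of_mul_transpose_ne_zero hne
      obtain ⟨w, hsw, hrw⟩ := hus.exists_sup hur fun hpq => hsr (hus.right_unique (hpq ▸ hur))
      exact diamond ⟨p, hp, q, hq, u, w, hus, hur, hsw, hrw⟩
    · by_contra hne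
      obtain ⟨p, hp, q, hq, w, hsw, hrw⟩ := exists_coversAt_of_transpose_mul_ne_zero (Ne.symm hne)
      obtain ⟨u, hus, hur⟩ := hsw.exists_inf hrw fun hpq => hsr (hsw.left_unique (hpq ▸ hrw))
      exact diamond ⟨p, hp, q, hq, u, w, hus, hur, hsw, hrw⟩

theorem lie_raiseMatrix_transpose_apply_self (i : N) (t : Labelling adj pos k) :
    ⁅raiseMatrix P i, (raiseMatrix P i)ᵀ⁆ t t = mwt i t := by
  have crossing := congrArg (Rat.cast (K := ℂ)) (hP.crossing i t)
  push_cast at crossing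
  simpa only [Ring.lie_def, Matrix.sub_apply, Matrix.mul_apply, Matrix.transpose_apply,
    raiseMatrix_mul_self hP.nonneg, ← Finset.sum_filter]

end EdgeRelations

namespace IsMinuscule

variable [DecidableRel adj] {bot : N} {top : N × ℕ} (h : IsMinuscule adj pos bot top)
include h

theorem edgeWeight_pos_of_edge (hrs : edge i r s) : 0 < edgeWeight bot top r s := by
  obtain ⟨p, -, hrs⟩ := edge_iff_exists_coversAt.1 hrs
  exact h.edgeWeight_pos hrs

theorem edgeRelations_edgeWeight (k : ℕ) :
    EdgeRelations (adj := adj) (pos := pos) (k := k) (edgeWeight bot top) where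
  nonneg hrs := (h.edgeWeight_pos_of_edge hrs).le
  diamond hus hur hsw hrw hpq := CoversAt.edgeWeight_mul_edgeWeight h.symm hus hur hrw hsw hpq
  crossing := h.sum_edgeWeight_sub_sum_edgeWeight

theorem mwt_eq_add_of_edge (hrs : edge j r s) (i : N) :
    mwt i s = mwt i r + cartanMatrix adj j i := by
  obtain ⟨p, hp, hrs⟩ := edge_iff_exists_coversAt.1 hrs
  rw [h.mwt_eq_add_of_coversAt hrs, (Finset.mem_filter.1 hp).2]

theorem lie_weightMatrix_raiseMatrix (i j : N) :
    ⁅weightMatrix adj pos k i, raiseMatrix P j⁆ = cartanMatrix adj j i • raiseMatrix P j := by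
  ext s r
  rw [weightMatrix, lie_diagonal_apply, Matrix.smul_apply, zsmul_eq_mul]
  by_cases hrs : edge j r s
  · rw [h.mwt_eq_add_of_edge hrs]
    push_cast
    ring
  · simp only [raiseMatrix, Matrix.of_apply, if_neg hrs, mul_zero]

theorem lie_weightMatrix_transpose (i j : N) : ⁅weightMatrix adj pos k i, (raiseMatrix P j)ᵀ⁆ =
    -(cartanMatrix adj j i • (raiseMatrix P j)ᵀ) := by
  rw [← Matrix.transpose_smul, ← h.lie_weightMatrix_raiseMatrix, ← Matrix.transpose_neg, lie_skew,
    Ring.lie_def, Ring.lie_def, Matrix.transpose_sub, Matrix.transpose_mul, Matrix.transpose_mul,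
    weightMatrix, Matrix.diagonal_transpose]

theorem chevalleyRelations (hP : EdgeRelations P) : ChevalleyRelations (cartanMatrix adj)
    (raiseMatrix P) (fun i => (raiseMatrix P i)ᵀ) (weightMatrix adj pos k) where
  lie_h_h i j := by
    ext s r
    rw [weightMatrix, lie_diagonal_apply, weightMatrix, Matrix.diagonal_apply, Matrix.zero_apply]
    split_ifs with hsr
    · rw [hsr, sub_self, zero_mul]
    · rw [mul_zero]
  lie_x_y i := by
    ext s r
    by_cases hsr : s = r
    · rw [hsr, hP.lie_raiseMatrix_transpose_apply_self, weightMatrix, Matrix.diagonal_apply_eq]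
    · rw [hP.lie_raiseMatrix_transpose_apply_of_ne hsr, weightMatrix,
        Matrix.diagonal_apply_ne _ hsr]
  lie_x_y_of_ne hij := by
    ext s r
    by_cases hsr : s = r
    · rw [hsr, lie_raiseMatrix_transpose_apply_self_of_ne hij, Matrix.zero_apply]
    · rw [hP.lie_raiseMatrix_transpose_apply_of_ne hsr, Matrix.zero_apply]
  lie_h_x := h.lie_weightMatrix_raiseMatrix
  lie_h_y := h.lie_weightMatrix_transpose

theorem exists_gLie_hom (hP : EdgeRelations P) :
    ∃ φ : gLie (cartanMatrix adj) →ₗ⁅ℂ⁆ Module.End ℂ (Labelling adj pos k → ℂ),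
      ∀ i, φ (px _ i) = opX P i ∧ φ (py _ i) = opY P i ∧ φ (ph _ i) = opH i := by
  have cartanMatrix_nonpos (i j : N) (hij : i ≠ j) : cartanMatrix adj j i ≤ 0 := by
    rw [cartanMatrix, if_neg hij.symm]
    split_ifs <;> decide
  obtain ⟨φ, hφ⟩ :=
    (h.chevalleyRelations hP).exists_gLie_hom (fun i => if_pos rfl) cartanMatrix_nonpos
  refine ⟨lieEquivMatrix'.symm.toLieHom.comp φ, fun i => ?_⟩
  obtain ⟨hx, hy, hh⟩ := hφ i
  exact ⟨congrArg Matrix.toLin' hx, congrArg Matrix.toLin' hy, congrArg Matrix.toLin' hh⟩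

end IsMinuscule

end Matrices

section Irreducibility

open scoped Matrix

theorem eq_bot_or_eq_top_of_forall_mem {n I K : Type*} [Fintype n] [Field K]
    {X : I → Matrix n n K} {v : n → K} (hv : v ⬝ᵥ v ≠ 0)
    (mem_of_ne_bot : ∀ W : Submodule K (n → K), (∀ i, ∀ w ∈ W, X i *ᵥ w ∈ W) → W ≠ ⊥ → v ∈ W)
    {U : Submodule K (n → K)} (hX : ∀ i, ∀ u ∈ U, X i *ᵥ u ∈ U)
    (hXT : ∀ i, ∀ u ∈ U, (X i)ᵀ *ᵥ u ∈ U) : U = ⊥ ∨ U = ⊤ := by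
  classical
  by_contra! hU
  let W := U.dualAnnihilator.comap (dotProductEquiv K n).toLinearMap
  have mem_W {w : n → K} : w ∈ W ↔ ∀ u ∈ U, w ⬝ᵥ u = 0 := Submodule.mem_dualAnnihilator _
  have W_invariant (i) (w) (hw : w ∈ W) : X i *ᵥ w ∈ W := mem_W.2 fun u hu => by
    rw [← Matrix.vecMul_transpose, ← Matrix.dotProduct_mulVec]
    exact mem_W.1 hw _ (hXT i u hu)
  have W_ne_bot : W ≠ ⊥ := fun hW => hU.2 <|
    Submodule.dualAnnihilator_eq_bot_iff.1 <| Submodule.comap_injective_of_surjective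
      (dotProductEquiv K n).surjective (hW.trans (dotProductEquiv K n).ker.symm)
  exact hv (mem_W.1 (mem_of_ne_bot W W_invariant W_ne_bot) v (mem_of_ne_bot U hX hU.1))

variable {N : Type} [DecidableEq N] {adj : N → N → Prop} {pos : Finset (N × ℕ)} {k : ℕ}
  {p x : N × ℕ} {r s t u : Labelling adj pos k} {P : Labelling adj pos k → Labelling adj pos k → ℚ}

theorem exists_killed_of_ne_bot {W : Submodule ℂ (Labelling adj pos k → ℂ)}
    (hW : ∀ i, ∀ w ∈ W, raiseMatrix P i *ᵥ w ∈ W) (W_ne_bot : W ≠ ⊥) :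
    ∃ v ∈ W, v ≠ 0 ∧ ∀ i, raiseMatrix P i *ᵥ v = 0 := by
  let ranks : Set ℕ := {n | ∃ w ∈ W, w ≠ 0 ∧ ∀ t, w t ≠ 0 → n ≤ rk t}
  have ranks_nonempty : ranks.Nonempty :=
    let ⟨w, hw, hw0⟩ := Submodule.exists_mem_ne_zero_of_ne_bot W_ne_bot
    ⟨0, w, hw, hw0, fun _ _ => Nat.zero_le _⟩
  have ranks_bdd : BddAbove ranks := by
    obtain ⟨M, hM⟩ := (Set.finite_range (rk : Labelling adj pos k → ℕ)).bddAbove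
    refine ⟨M, ?_⟩
    rintro n ⟨w, -, hw0, support⟩
    obtain ⟨t, ht⟩ := Function.ne_iff.1 hw0
    exact (support t ht).trans (hM ⟨t, rfl⟩)
  obtain ⟨v, hv, hv0, support⟩ := Nat.sSup_mem ranks_nonempty ranks_bdd
  refine ⟨v, hv, hv0, fun i => of_not_not fun hne => ?_⟩
  refine Nat.not_succ_le_self _ (le_csSup ranks_bdd ⟨_, hW i v hv, hne, fun s hs => ?_⟩)
  obtain ⟨r, -, hr⟩ := Finset.exists_ne_zero_of_sum_ne_zero hs
  obtain ⟨p, -, hrs⟩ := edge_iff_exists_coversAt.1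
    (edge_of_raiseMatrix_ne_zero (left_ne_zero_of_mul hr))
  rw [hrs.rk_eq]
  exact Nat.succ_le_succ (support r (right_ne_zero_of_mul hr))

/-- The sum of the ranks of the positions, counted with their labels; by induction on it a vector
killed by all raising operators vanishes outside the top labelling. -/
def rankMoment (t : Labelling adj pos k) : ℕ := ∑ p ∈ pos, label t p * p.2

theorem CoversAt.rankMoment_eq (hrs : CoversAt p r s) : rankMoment s = rankMoment r + p.2 := by
  simp only [rankMoment, hrs.label_eq, add_mul, Finset.sum_add_distrib, ite_mul, one_mul, zero_mul,
    Finset.sum_ite_eq', hrs.mem, if_true]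

theorem CoversAt.left_ne_topLabelling (hrs : CoversAt p r s) : r ≠ topLabelling adj pos k := by
  rintro rfl
  have := hrs.label_self.symm.trans_le (label_le s p)
  rw [label_topLabelling hrs.mem] at this
  lia

theorem exists_lt_and_forall_eq_of_ne_topLabelling (ht : t ≠ topLabelling adj pos k) :
    ∃ x ∈ pos, label t x < k ∧ ∀ y ∈ pos, y.2 < x.2 → label t y = k := by
  have defect : {x ∈ pos | label t x < k}.Nonempty := by
    by_contra! hempty
    refine ht (label_injective (funext fun x => ?_))
    by_cases hx : x ∈ pos
    · rw [label_topLabelling hx]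
      exact (label_le t x).antisymm (not_lt.1 (Finset.filter_eq_empty_iff.1 hempty hx))
    · rw [label_of_notMem _ hx, label_of_notMem _ hx]
  obtain ⟨x, hx, rank_le⟩ := Finset.exists_min_image _ Prod.snd defect
  obtain ⟨hx, hlt⟩ := Finset.mem_filter.1 hx
  refine ⟨x, hx, hlt, fun y hy hyx => (label_le t y).antisymm (not_lt.1 fun hylt => ?_)⟩
  exact hyx.not_ge (rank_le y (Finset.mem_filter.2 ⟨hy, hylt⟩))

namespace IsMinuscule

variable [DecidableRel adj] {bot : N} {top : N × ℕ} (h : IsMinuscule adj pos bot top)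
include h

theorem le_upperBound_of_forall_eq (hx : x ∈ pos) (below : ∀ y ∈ pos, y.2 < x.2 → label t y = k) :
    k ≤ upperBound t x := by
  refine le_upperBound_iff.2 ⟨le_rfl, fun y hy => ?_⟩
  obtain ⟨y_mem, -, -, rank_eq⟩ := (mem_lowerCovers h.symm hx).1 hy
  exact (below y y_mem (by lia)).ge

theorem rankMoment_lt (hts : CoversAt x t s) (hus : CoversAt p u s) (hpx : p ≠ x)
    (hcolor : p.1 = x.1) (below : ∀ y ∈ pos, y.2 < x.2 → label t y = k) :
    rankMoment u < rankMoment t := by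
  have rank_lt : x.2 < p.2 := by
    refine (Ne.lt_or_gt fun rank_eq => hpx (Prod.ext hcolor rank_eq)).resolve_left fun hlt => ?_
    have class_mem : x ∈ colorClass pos p.1 := Finset.mem_filter.2 ⟨hts.mem, hcolor.symm⟩
    have bound_le := (h.rank_add_two_le_and_upperBound_le_lowerBound s hus.mem class_mem hlt).2
    have le_bound : k ≤ upperBound s x := h.le_upperBound_of_forall_eq hts.mem fun y hy hyx => by
      rw [hts.label_of_ne (by rintro rfl; exact hyx.false), below y hy hyx]
    exact absurd (label_le s p)
      ((le_bound.trans bound_le).trans_lt hus.lowerBound_lt_label).not_ge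
  have := hts.rankMoment_eq
  have := hus.rankMoment_eq
  lia

theorem eq_zero_of_killed (hP : ∀ r s, (∃ i, edge i r s) → 0 < P r s)
    {v : Labelling adj pos k → ℂ} (hv : ∀ i, raiseMatrix P i *ᵥ v = 0)
    (t : Labelling adj pos k) (ht : t ≠ topLabelling adj pos k) : v t = 0 := by
  induction hn : rankMoment t using Nat.strong_induction_on generalizing t with
  | _ n ih =>
  obtain ⟨x, hx, hlt, below⟩ := exists_lt_and_forall_eq_of_ne_topLabelling ht
  obtain ⟨s, hts⟩ := h.exists_coversAt_right hx
    (hlt.trans_le (h.le_upperBound_of_forall_eq hx below))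
  have only_t : (raiseMatrix P x.1 *ᵥ v) s = raiseMatrix P x.1 s t * v t := by
    refine Finset.sum_eq_single t (fun u _ hut => ?_) fun hmem => absurd (Finset.mem_univ t) hmem
    by_contra hprod
    obtain ⟨p, hp, hus⟩ := edge_iff_exists_coversAt.1
      (edge_of_raiseMatrix_ne_zero (left_ne_zero_of_mul hprod))
    have hpx : p ≠ x := by rintro rfl; exact hut (hus.left_unique hts)
    have moment_lt := h.rankMoment_lt hts hus hpx (Finset.mem_filter.1 hp).2 below
    exact right_ne_zero_of_mul hprod (ih _ (hn ▸ moment_lt) u hus.left_ne_topLabelling rfl)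
  have coeff_ne_zero : raiseMatrix P x.1 s t ≠ 0 := by
    have P_pos : (0 : ℝ) < P t s := mod_cast hP t s ⟨x.1, hts.edge⟩
    rw [raiseMatrix_of_edge hts.edge]
    exact_mod_cast (Real.sqrt_pos.2 P_pos).ne'
  rw [hv, Pi.zero_apply] at only_t
  exact (mul_eq_zero.1 only_t.symm).resolve_left coeff_ne_zero

theorem single_topLabelling_mem (hP : ∀ r s, (∃ i, edge i r s) → 0 < P r s)
    {W : Submodule ℂ (Labelling adj pos k → ℂ)}
    (hW : ∀ i, ∀ w ∈ W, raiseMatrix P i *ᵥ w ∈ W) (W_ne_bot : W ≠ ⊥) :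
    Pi.single (topLabelling adj pos k) 1 ∈ W := by
  obtain ⟨v, hv, hv0, killed⟩ := exists_killed_of_ne_bot hW W_ne_bot
  obtain ⟨a, rfl⟩ : ∃ a : ℂ, v = a • Pi.single (topLabelling adj pos k) 1 := by
    refine ⟨v (topLabelling adj pos k), funext fun t => ?_⟩
    rw [Pi.smul_apply, Pi.single_apply]
    split_ifs with ht
    · rw [ht, smul_eq_mul, mul_one]
    · rw [h.eq_zero_of_killed hP killed t ht, smul_zero]
  exact (W.smul_mem_iff (left_ne_zero_of_smul hv0)).1 hv

theorem eq_bot_or_eq_top (hP : ∀ r s, (∃ i, edge i r s) → 0 < P r s)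
    {U : Submodule ℂ (Labelling adj pos k → ℂ)} (hX : ∀ i, ∀ u ∈ U, opX P i u ∈ U)
    (hY : ∀ i, ∀ u ∈ U, opY P i u ∈ U) : U = ⊥ ∨ U = ⊤ :=
  eq_bot_or_eq_top_of_forall_mem (X := raiseMatrix P) (v := Pi.single (topLabelling adj pos k) 1)
    (by simp) (fun _ => h.single_topLabelling_mem hP) hX hY

theorem opH_single_topLabelling (i : N) :
    opH i (Pi.single (topLabelling adj pos k) 1 : Labelling adj pos k → ℂ) =
      (if i = top.1 then (k : ℂ) else 0) • Pi.single (topLabelling adj pos k) 1 := by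
  have mwt_top := congrArg (Int.cast (R := ℂ)) (h.mwt_topLabelling (k := k) i)
  push_cast at mwt_top
  rw [opH, Matrix.mulVecLin_apply, Matrix.diagonal_mulVec_single, mul_one, mwt_top,
    ← Pi.single_smul, smul_eq_mul, mul_one]

end IsMinuscule

theorem opX_single_topLabelling (i : N) :
    opX P i (Pi.single (topLabelling adj pos k) 1) = 0 := by
  change raiseMatrix P i *ᵥ _ = 0
  rw [Matrix.mulVec_single_one]
  funext s
  by_contra hs
  obtain ⟨p, -, hcov⟩ := edge_iff_exists_coversAt.1 (edge_of_raiseMatrix_ne_zero hs)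
  exact hcov.left_ne_topLabelling rfl

end Irreducibility

theorem isMinuscule_pos7 : IsMinuscule adj7 pos7 n1 (n1, 16) where
  symm := by decide
  irrefl := by decide
  exists_color := by decide
  rank_ne := by decide +kernel
  interval := by decide +kernel
  below_first := by decide +kernel
  above_last := by decide +kernel

end CL

theorem statement_11_general {N : Type} [DecidableEq N] {adj : N → N → Prop} [DecidableRel adj]
    {pos : Finset (N × ℕ)} {bot : N} {top : N × ℕ} (h : CL.IsMinuscule adj pos bot top) (k : ℕ) :
    ∃ P : CL.Labelling adj pos k → CL.Labelling adj pos k → ℚ,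
      (∀ r s, (∃ i, CL.edge i r s) → 0 < P r s) ∧
      (∃ φ : CL.gLie (CL.cartanMatrix adj) →ₗ⁅ℂ⁆ Module.End ℂ (CL.Labelling adj pos k → ℂ),
        ∀ i, φ (CL.px _ i) = CL.opX P i ∧ φ (CL.py _ i) = CL.opY P i ∧
          φ (CL.ph _ i) = CL.opH i) ∧
      ∀ P' : CL.Labelling adj pos k → CL.Labelling adj pos k → ℚ,
        (∀ r s, (∃ i, CL.edge i r s) → 0 < P' r s) →
        ∀ φ : CL.gLie (CL.cartanMatrix adj) →ₗ⁅ℂ⁆ Module.End ℂ (CL.Labelling adj pos k → ℂ),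
          (∀ i, φ (CL.px _ i) = CL.opX P' i ∧ φ (CL.py _ i) = CL.opY P' i ∧
            φ (CL.ph _ i) = CL.opH i) →
          (∀ U : Submodule ℂ (CL.Labelling adj pos k → ℂ), (∀ g, ∀ v ∈ U, φ g v ∈ U) →
            U = ⊥ ∨ U = ⊤) ∧
          (∀ i, CL.opX P' i (Pi.single (CL.topLabelling adj pos k) 1) = 0) ∧
          CL.opH top.1 (Pi.single (CL.topLabelling adj pos k) 1 : CL.Labelling adj pos k → ℂ) =
            (k : ℂ) • Pi.single (CL.topLabelling adj pos k) 1 ∧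
          ∀ j, j ≠ top.1 →
            CL.opH j (Pi.single (CL.topLabelling adj pos k) 1 : CL.Labelling adj pos k → ℂ) =
              0 := by
  refine ⟨CL.edgeWeight bot top, fun r s ⟨i, hrs⟩ => h.edgeWeight_pos_of_edge hrs,
    h.exists_gLie_hom (h.edgeRelations_edgeWeight k), fun P' hP' φ hφ => ⟨fun U hU => ?_,
    CL.opX_single_topLabelling, ?_, fun j hj => ?_⟩⟩
  · exact h.eq_bot_or_eq_top hP' (fun i u hu => (hφ i).1 ▸ hU _ u hu)
      fun i u hu => (hφ i).2.1 ▸ hU _ u hu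
  · rw [h.opH_single_topLabelling, if_pos rfl]
  · rw [h.opH_single_topLabelling, if_neg hj, zero_smul]

/-- Theorem 4.4: there is a family of positive rational edge coefficients
on `L7(k)` whose square roots define a representation of `𝔤(E₇)` on `⟨v_t : t ∈ L7(k)⟩`;
any such representation is irreducible with highest weight `kω₁`. -/
theorem statement_11 (k : ℕ) :
    ∃ P : L7 k → L7 k → ℚ,
      (∀ r s : L7 k, (∃ i, CL.edge i r s) → 0 < P r s) ∧
      (∃ φ : CL.gLie A7 →ₗ⁅ℂ⁆ Module.End ℂ (L7 k → ℂ),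
        ∀ i : N7, φ (CL.px A7 i) = CL.opX P i ∧ φ (CL.py A7 i) = CL.opY P i ∧
          φ (CL.ph A7 i) = CL.opH i) ∧
      ∀ P' : L7 k → L7 k → ℚ, (∀ r s : L7 k, (∃ i, CL.edge i r s) → 0 < P' r s) →
        ∀ φ : CL.gLie A7 →ₗ⁅ℂ⁆ Module.End ℂ (L7 k → ℂ),
          (∀ i : N7, φ (CL.px A7 i) = CL.opX P' i ∧ φ (CL.py A7 i) = CL.opY P' i ∧
            φ (CL.ph A7 i) = CL.opH i) →
          (∀ U : Submodule ℂ (L7 k → ℂ), (∀ g : CL.gLie A7, ∀ v ∈ U, φ g v ∈ U) →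
            U = ⊥ ∨ U = ⊤) ∧
          (∀ i : N7, CL.opX P' i ((Pi.single (top7 k) 1 : L7 k → ℂ)) = 0) ∧
          CL.opH n1 ((Pi.single (top7 k) 1 : L7 k → ℂ)) = (k : ℂ) • (Pi.single (top7 k) 1 : L7 k → ℂ) ∧
          (∀ j : N7, j ≠ n1 → CL.opH j ((Pi.single (top7 k) 1 : L7 k → ℂ)) = 0) :=
  statement_11_general CL.isMinuscule_pos7 k

end
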